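/- arXiv:1108.2219 — 4 statements merged into one kernel-verified Lean document; each statement's English description precedes it below -/
import Mathlib

section
/- The skew Schur function s_{(3,2,1)/(1)} (i.e., δ_3/δ_1) equals the Schur P-function P_{(3,2)}; equivalently, in any number of variables, ∑_T x^T over SSYT of shape (3,2,1)/(1) equals ∑_S x^S over shifted SSYT of shifted shape (3,2). -/
/-!
STATEMENT 10: s_{(3,2,1)/(1)} = P_{(3,2)} as formal power series.
-/

noncomputable section

/-- The cells of the skew Young diagram lam/mu (rows 0-indexed). -/
def skewCells (lam mu : List ℕ) : Finset (ℕ × ℕ) :=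
  (Finset.range lam.length ×ˢ Finset.range (lam.foldr max 0)).filter
    (fun c => mu.getD c.1 0 ≤ c.2 ∧ c.2 < lam.getD c.1 0)

/-- A semistandard Young tableau of skew shape lam/mu: entries are positive integers,
rows weakly increase, columns strictly increase. -/
structure SkewSSYT (lam mu : List ℕ) where
  entry : ℕ × ℕ → ℕ
  outside : ∀ c ∉ skewCells lam mu, entry c = 0
  pos : ∀ c ∈ skewCells lam mu, 1 ≤ entry c
  rowWeak : ∀ i j, (i, j) ∈ skewCells lam mu → (i, j + 1) ∈ skewCells lam mu →
    entry (i, j) ≤ entry (i, j + 1)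
  colStrict : ∀ i j, (i, j) ∈ skewCells lam mu → (i + 1, j) ∈ skewCells lam mu →
    entry (i, j) < entry (i + 1, j)

/-- The skew Schur function s_{lam/mu} = ∑_T x^T, as a formal power series in the
variables x₁, x₂, … (indexed by ℕ; the variable `X k` records entries equal to `k`). -/
def skewSchur (lam mu : List ℕ) : MvPowerSeries ℕ ℚ :=
  fun m => (Nat.card {T : SkewSSYT lam mu //
    ∀ k, ((skewCells lam mu).filter (fun c => T.entry c = k)).card = m k} : ℚ)

/-- The cells of the shifted diagram of a strict partition `lam` (row `i` indented `i`). -/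
def shiftedCells (lam : List ℕ) : Finset (ℕ × ℕ) :=
  (Finset.range lam.length ×ˢ Finset.range (lam.length + lam.foldr max 0)).filter
    (fun c => c.1 ≤ c.2 ∧ c.2 < c.1 + lam.getD c.1 0)

/-- A shifted semistandard Young tableau of shifted shape `lam`, over the alphabet
1' < 1 < 2' < 2 < ⋯ encoded as natural numbers: the letter k' is `2k - 1` (odd) and the
letter k is `2k` (even), for k ≥ 1.  Rows and columns weakly increase; two equal adjacent
letters in a row must be unprimed (each k' occurs at most once per row) and two equal
adjacent letters in a column must be primed (each k occurs at most once per column);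
entries on the main diagonal are unprimed. -/
structure ShiftedSSYT (lam : List ℕ) where
  entry : ℕ × ℕ → ℕ
  outside : ∀ c ∉ shiftedCells lam, entry c = 0
  pos : ∀ c ∈ shiftedCells lam, 1 ≤ entry c
  rowWeak : ∀ i j, (i, j) ∈ shiftedCells lam → (i, j + 1) ∈ shiftedCells lam →
    entry (i, j) ≤ entry (i, j + 1)
  rowPrime : ∀ i j, (i, j) ∈ shiftedCells lam → (i, j + 1) ∈ shiftedCells lam →
    entry (i, j) = entry (i, j + 1) → Even (entry (i, j))
  colWeak : ∀ i j, (i, j) ∈ shiftedCells lam → (i + 1, j) ∈ shiftedCells lam →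
    entry (i, j) ≤ entry (i + 1, j)
  colPrime : ∀ i j, (i, j) ∈ shiftedCells lam → (i + 1, j) ∈ shiftedCells lam →
    entry (i, j) = entry (i + 1, j) → Odd (entry (i, j))
  diag : ∀ i, (i, i) ∈ shiftedCells lam → Even (entry (i, i))

/-- The Schur P-function P_lam = ∑_S x^S: the variable `X k` records the total number of
occurrences of the letters k and k' (encoded `2k` and `2k - 1`). -/
def schurP (lam : List ℕ) : MvPowerSeries ℕ ℚ :=
  fun m => (Nat.card {S : ShiftedSSYT lam //
    ∀ k, ((shiftedCells lam).filter (fun c => (S.entry c + 1) / 2 = k)).card = m k} : ℚ)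

/-!
Read the ribbon `(3,2,1)/(1)` from its lower left to its upper right end: a tableau becomes a word
`w₁ > w₂ ≤ w₃ > w₄ ≤ w₅`. In a shifted tableau `p q r / s t` only `q`, `r`, `t` can be primed, and
recording the primes as signs turns all conditions into comparisons `SignedLE ε x y`, weak or strict
according to the sign `ε`. Since the negation of `SignedLE ε x y` is `SignedLE (!ε) y x`, a sign can
store the outcome of a comparison, which is how rearranging the letters of a word loses no
information.
The smaller of the two valleys `w₂`, `w₄` becomes `p`; of the letters bounded below only by `p`,
the smaller one becomes `q`, its sign determined by the two comparisons made so far; the signs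
of `r` and `t` store the arrangement of the three remaining letters.
-/

/-- The comparison of `x` and `y` attached to a sign: weak for `false` (unprimed), strict for `true`
(primed). -/
def SignedLE {α : Type*} [Preorder α] : Bool → α → α → Prop
  | false, x, y => x ≤ y
  | true, x, y => x < y

section SignedLE

variable {α : Type*}

theorem not_signedLE [LinearOrder α] {ε : Bool} {x y : α} :
    ¬ SignedLE ε x y ↔ SignedLE (!ε) y x := by
  cases ε
  · exact not_le
  · exact not_lt

theorem not_signedLE_not [LinearOrder α] {ε : Bool} {x y : α} :
    ¬ SignedLE (!ε) x y ↔ SignedLE ε y x := by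
  rw [not_signedLE, Bool.not_not]

theorem SignedLE.le [Preorder α] {ε : Bool} {x y : α} (h : SignedLE ε x y) : x ≤ y := by
  cases ε
  · exact h
  · exact le_of_lt h

theorem SignedLE.trans_le [Preorder α] {ε : Bool} {x y z : α} (hxy : SignedLE ε x y) (hyz : y ≤ z) :
    SignedLE ε x z := by
  cases ε
  · exact le_trans hxy hyz
  · exact lt_of_lt_of_le hxy hyz

theorem SignedLE.of_le_of_signedLE [Preorder α] {ε : Bool} {x y z : α} (hxy : x ≤ y)
    (hyz : SignedLE ε y z) : SignedLE ε x z := by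
  cases ε
  · exact le_trans hxy hyz
  · exact lt_of_le_of_lt hxy hyz

theorem signedLE_coe_pnat {ε : Bool} {x y : ℕ+} : SignedLE ε (x : ℕ) y ↔ SignedLE ε x y := by
  cases ε <;> rfl

end SignedLE

section Bijection

variable {α : Type*}

/-- A filling of a zigzag ribbon by letters of an ordered alphabet, as a word. -/
@[ext]
structure ZigzagWord (α : Type*) [Preorder α] where
  (w₁ w₂ w₃ w₄ w₅ : α)
  w₂_lt_w₁ : w₂ < w₁
  w₂_le_w₃ : w₂ ≤ w₃
  w₄_lt_w₃ : w₄ < w₃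
  w₄_le_w₅ : w₄ ≤ w₅

/-- The shape of a shifted tableau `p q r / s t` over an arbitrary ordered alphabet, with the primes
of the off-diagonal entries recorded as signs. -/
@[ext]
structure ShiftedFilling (α : Type*) [Preorder α] where
  (p q r s t : α)
  (qSign rSign tSign : Bool)
  p_le_q : SignedLE qSign p q
  q_le_r : SignedLE rSign q r
  s_le_t : SignedLE tSign s t
  q_le_s : SignedLE (!qSign) q s
  r_le_t : SignedLE (!rSign) r t

/-- A zigzag word seen from its smaller valley `p`: `x` is the other valley, `d` the peak between
the valleys, `y` and `z` are the end letters next to `x` and `p`. The sign is `false` if `p` comes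
from `w₂` and `true` if it comes from `w₄`. -/
@[ext]
structure FoldedZigzag (α : Type*) [Preorder α] where
  sign : Bool
  (p x y z d : α)
  p_le_x : SignedLE sign p x
  x_le_d : SignedLE (!sign) x d
  x_le_y : SignedLE sign x y
  p_le_z : SignedLE (!sign) p z

/-- A folded zigzag with `x` smaller than `z`, renamed `q`: a chain `p`, `q` with three letters
above it, not compared with each other. -/
@[ext]
structure Fork (α : Type*) [Preorder α] where
  sign : Bool
  (p q y z d : α)
  p_le_q : SignedLE sign p q
  q_le_y : SignedLE sign q y
  q_le_z : SignedLE (!sign) q z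
  q_le_d : SignedLE (!sign) q d

/-- A folded zigzag with `z` smaller than `x`, renamed `q`: a chain `p`, `q`, `x` with two letters
above it, not compared with each other. The sign is negated, so as to become that of `q` in a
shifted filling. -/
@[ext]
structure Vee (α : Type*) [Preorder α] where
  sign : Bool
  (p q x y d : α)
  p_le_q : SignedLE sign p q
  q_le_x : SignedLE (!sign) q x
  x_le_y : SignedLE (!sign) x y
  x_le_d : SignedLE sign x d

variable [LinearOrder α]

instance (ε : Bool) (x y : α) : Decidable (SignedLE ε x y) := by
  cases ε <;> unfold SignedLE <;> infer_instance

/-- Compare the valleys `w₂` and `w₄`. -/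
def ZigzagWord.foldEquiv : ZigzagWord α ≃ FoldedZigzag α where
  toFun w :=
    if h : w.w₂ ≤ w.w₄ then
      ⟨false, w.w₂, w.w₄, w.w₅, w.w₁, w.w₃, h, w.w₄_lt_w₃, w.w₄_le_w₅, w.w₂_lt_w₁⟩
    else
      ⟨true, w.w₄, w.w₂, w.w₁, w.w₅, w.w₃, not_le.mp h, w.w₂_le_w₃, w.w₂_lt_w₁, w.w₄_le_w₅⟩
  invFun
    | ⟨false, p, x, y, z, d, px, xd, xy, pz⟩ => ⟨z, p, d, x, y, pz, px.trans xd.le, xd, xy⟩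
    | ⟨true, p, x, y, z, d, px, xd, xy, pz⟩ => ⟨y, x, d, p, z, xy, xd, px.trans_le xd, pz⟩
  left_inv w := by dsimp only; split_ifs <;> rfl
  right_inv := by
    rintro ⟨_ | _, p, x, y, z, d, px, xd, xy, pz⟩
    · exact dif_pos px
    · exact dif_neg (not_le.mpr px)

/-- Compare `x` and `z`. -/
def FoldedZigzag.equivForkSumVee : FoldedZigzag α ≃ Fork α ⊕ Vee α where
  toFun f :=
    if h : SignedLE (!f.sign) f.x f.z then
      .inl ⟨f.sign, f.p, f.x, f.y, f.z, f.d, f.p_le_x, f.x_le_y, h, f.x_le_d⟩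
    else
      .inr ⟨!f.sign, f.p, f.z, f.x, f.y, f.d, f.p_le_z, not_signedLE.mp h,
        by simpa using f.x_le_y, f.x_le_d⟩
  invFun
    | .inl f => ⟨f.sign, f.p, f.q, f.y, f.z, f.d, f.p_le_q, f.q_le_d, f.q_le_y,
        .of_le_of_signedLE f.p_le_q.le f.q_le_z⟩
    | .inr v => ⟨!v.sign, v.p, v.x, v.y, v.q, v.d, .of_le_of_signedLE v.p_le_q.le v.q_le_x,
        by simpa using v.x_le_d, v.x_le_y, by simpa using v.p_le_q⟩
  left_inv f := by dsimp only; split_ifs <;> simp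
  right_inv
    | .inl f => dif_pos f.q_le_z
    | .inr v => by
      have h : ¬ SignedLE v.sign v.x v.q := not_signedLE.mpr v.q_le_x
      simp [h]

/-- The largest of `y`, `z`, `d` becomes `t`, and the signs of `r` and `t` say which one it was: the
sign of `r` differs from that of `q` for `y`, the sign of `t` does for `z`, and neither for `d`. -/
def Fork.toShiftedFilling (f : Fork α) : ShiftedFilling α :=
  if h : SignedLE f.sign f.z f.y ∧ SignedLE f.sign f.d f.y then
    ⟨f.p, f.q, f.z, f.d, f.y, f.sign, !f.sign, f.sign,
      f.p_le_q, f.q_le_z, h.2, f.q_le_d, by simpa only [Bool.not_not] using h.1⟩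
  else if hzd : SignedLE f.sign f.z f.d then
    ⟨f.p, f.q, f.y, f.z, f.d, f.sign, f.sign, f.sign, f.p_le_q, f.q_le_y, hzd, f.q_le_z,
      not_signedLE.mp fun hdy => h ⟨.of_le_of_signedLE hzd.le hdy, hdy⟩⟩
  else
    have hdz := not_signedLE.mp hzd
    ⟨f.p, f.q, f.y, f.d, f.z, f.sign, f.sign, !f.sign, f.p_le_q, f.q_le_y, hdz, f.q_le_d,
      not_signedLE.mp fun hzy => h ⟨hzy, .of_le_of_signedLE hdz.le hzy⟩⟩

/-- The larger of `y`, `d` becomes `t`, the smaller one `r` if it is `y` and `s` if it is `d`. The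
signs of `r` and `t` both differ from that of `q`, which never happens for a fork. -/
def Vee.toShiftedFilling (v : Vee α) : ShiftedFilling α :=
  if h : SignedLE v.sign v.y v.d then
    ⟨v.p, v.q, v.y, v.x, v.d, v.sign, !v.sign, !v.sign,
      v.p_le_q, v.q_le_x.trans_le v.x_le_y.le, v.x_le_y.trans_le h.le, v.q_le_x,
      by simpa only [Bool.not_not] using h⟩
  else
    have hdy := not_signedLE.mp h
    ⟨v.p, v.q, v.x, v.d, v.y, v.sign, !v.sign, !v.sign,
      v.p_le_q, v.q_le_x, hdy, v.q_le_x.trans_le v.x_le_d.le,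
      by simpa only [Bool.not_not] using v.x_le_d.trans_le hdy.le⟩

/-- The inverse of `Fork.toShiftedFilling` and `Vee.toShiftedFilling`. -/
def ShiftedFilling.toForkSumVee (F : ShiftedFilling α) : Fork α ⊕ Vee α :=
  have qt : SignedLE (!F.qSign) F.q F.t := F.q_le_s.trans_le F.s_le_t.le
  if hr : F.rSign = F.qSign then
    have qr : SignedLE F.qSign F.q F.r := hr ▸ F.q_le_r
    if F.tSign = F.qSign then
      .inl ⟨F.qSign, F.p, F.q, F.r, F.s, F.t, F.p_le_q, qr, F.q_le_s, qt⟩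
    else
      .inl ⟨F.qSign, F.p, F.q, F.r, F.t, F.s, F.p_le_q, qr, qt, F.q_le_s⟩
  else
    have qr : SignedLE (!F.qSign) F.q F.r := Bool.eq_not.mpr hr ▸ F.q_le_r
    have rt : SignedLE F.qSign F.r F.t := by
      simpa only [Bool.eq_not.mpr hr, Bool.not_not] using F.r_le_t
    if ht : F.tSign = F.qSign then
      .inl ⟨F.qSign, F.p, F.q, F.t, F.r, F.s, F.p_le_q,
        .of_le_of_signedLE F.q_le_s.le (ht ▸ F.s_le_t), qr, F.q_le_s⟩
    else if h : SignedLE (!F.qSign) F.s F.r then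
      .inr ⟨F.qSign, F.p, F.q, F.s, F.r, F.t, F.p_le_q, F.q_le_s, h, .of_le_of_signedLE h.le rt⟩
    else
      have rs : SignedLE F.qSign F.r F.s := not_signedLE_not.mp h
      have st : SignedLE (!F.qSign) F.s F.t := Bool.eq_not.mpr ht ▸ F.s_le_t
      .inr ⟨F.qSign, F.p, F.q, F.r, F.t, F.s, F.p_le_q, qr, .of_le_of_signedLE rs.le st, rs⟩

theorem Fork.toForkSumVee_toShiftedFilling (f : Fork α) :
    f.toShiftedFilling.toForkSumVee = .inl f := by
  unfold toShiftedFilling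
  split_ifs <;> simp [ShiftedFilling.toForkSumVee]

theorem Vee.toForkSumVee_toShiftedFilling (v : Vee α) :
    v.toShiftedFilling.toForkSumVee = .inr v := by
  unfold toShiftedFilling
  split_ifs
  · simp [ShiftedFilling.toForkSumVee, v.x_le_y]
  · simp [ShiftedFilling.toForkSumVee, not_signedLE_not.mpr v.x_le_d]

theorem ShiftedFilling.toShiftedFilling_toForkSumVee (F : ShiftedFilling α) :
    F.toForkSumVee.elim Fork.toShiftedFilling Vee.toShiftedFilling = F := by
  obtain ⟨p, q, r, s, t, ε, εr, εt, pq, qr, st, qs, rt⟩ := F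
  obtain rfl | rfl : εr = ε ∨ εr = !ε := Bool.eq_or_eq_not εr ε
  · have htr : ¬ SignedLE εr t r := not_signedLE.mpr rt
    obtain rfl | rfl : εt = εr ∨ εt = !εr := Bool.eq_or_eq_not εt εr
    · simp [toForkSumVee, Fork.toShiftedFilling, htr, st]
    · simp [toForkSumVee, Fork.toShiftedFilling, htr, not_signedLE.mpr st]
  · rw [Bool.not_not] at rt
    obtain rfl | rfl : εt = ε ∨ εt = !ε := Bool.eq_or_eq_not εt ε
    · simp [toForkSumVee, Fork.toShiftedFilling, rt, st]
    · by_cases hsr : SignedLE (!ε) s r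
      · simp [toForkSumVee, Vee.toShiftedFilling, hsr, rt]
      · simp [toForkSumVee, Vee.toShiftedFilling, hsr, not_signedLE.mpr st]

/-- Shifted fillings come from forks and vees, told apart by the signs of `r` and `t`. -/
def ShiftedFilling.forkSumVeeEquiv : Fork α ⊕ Vee α ≃ ShiftedFilling α where
  toFun := Sum.elim Fork.toShiftedFilling Vee.toShiftedFilling
  invFun := toForkSumVee
  left_inv
    | .inl f => f.toForkSumVee_toShiftedFilling
    | .inr v => v.toForkSumVee_toShiftedFilling
  right_inv := toShiftedFilling_toForkSumVee

/-- The multiset of letters. -/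
def ZigzagWord.content (w : ZigzagWord α) : Multiset α := {w.w₁, w.w₂, w.w₃, w.w₄, w.w₅}

/-- The multiset of letters. -/
def FoldedZigzag.content (f : FoldedZigzag α) : Multiset α := {f.p, f.x, f.y, f.z, f.d}

/-- The multiset of letters. -/
def Fork.content (f : Fork α) : Multiset α := {f.p, f.q, f.y, f.z, f.d}

/-- The multiset of letters. -/
def Vee.content (v : Vee α) : Multiset α := {v.p, v.q, v.x, v.y, v.d}

/-- The multiset of letters, primes disregarded. -/
def ShiftedFilling.content (F : ShiftedFilling α) : Multiset α := {F.p, F.q, F.r, F.s, F.t}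

theorem ZigzagWord.content_foldEquiv (w : ZigzagWord α) :
    (foldEquiv w).content = w.content := by
  simp only [foldEquiv, Equiv.coe_fn_mk]
  split_ifs <;>
    simp only [content, FoldedZigzag.content, Multiset.insert_eq_cons,
      ← Multiset.singleton_add] <;> abel

theorem FoldedZigzag.content_equivForkSumVee (f : FoldedZigzag α) :
    (equivForkSumVee f).elim Fork.content Vee.content = f.content := by
  simp only [equivForkSumVee, Equiv.coe_fn_mk]
  split_ifs <;>
    simp only [content, Sum.elim_inl, Sum.elim_inr, Fork.content, Vee.content,
      Multiset.insert_eq_cons, ← Multiset.singleton_add]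
  abel

theorem Fork.content_toShiftedFilling (f : Fork α) :
    f.toShiftedFilling.content = f.content := by
  unfold toShiftedFilling
  split_ifs <;>
    simp only [content, ShiftedFilling.content, Multiset.insert_eq_cons,
      ← Multiset.singleton_add] <;> abel

theorem Vee.content_toShiftedFilling (v : Vee α) :
    v.toShiftedFilling.content = v.content := by
  unfold toShiftedFilling
  split_ifs <;>
    simp only [content, ShiftedFilling.content, Multiset.insert_eq_cons,
      ← Multiset.singleton_add] <;> abel

/-- The content-preserving bijection behind the theorem, over an arbitrary ordered alphabet. -/
def ZigzagWord.equivShiftedFilling : ZigzagWord α ≃ ShiftedFilling α :=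
  foldEquiv.trans (FoldedZigzag.equivForkSumVee.trans ShiftedFilling.forkSumVeeEquiv)

theorem ZigzagWord.content_equivShiftedFilling (w : ZigzagWord α) :
    (equivShiftedFilling w).content = w.content := by
  have content_forkSumVeeEquiv (g : Fork α ⊕ Vee α) :
      (ShiftedFilling.forkSumVeeEquiv g).content = g.elim Fork.content Vee.content := by
    cases g with
    | inl f => exact f.content_toShiftedFilling
    | inr v => exact v.content_toShiftedFilling
  calc (equivShiftedFilling w).content
    _ = (FoldedZigzag.equivForkSumVee (foldEquiv w)).elim Fork.content Vee.content :=
      content_forkSumVeeEquiv _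
    _ = (foldEquiv w).content := FoldedZigzag.content_equivForkSumVee _
    _ = w.content := content_foldEquiv w

end Bijection

namespace SkewSSYT

variable {lam mu : List ℕ}

/-- The entry of a cell, as a positive integer. -/
def value (T : SkewSSYT lam mu) (c : ℕ × ℕ) (hc : c ∈ skewCells lam mu) : ℕ+ :=
  ⟨T.entry c, T.pos c hc⟩

theorem ext_of_value {T T' : SkewSSYT lam mu} (h : ∀ c hc, T.value c hc = T'.value c hc) :
    T = T' := by
  have entry_eq : T.entry = T'.entry := by
    funext c
    by_cases hc : c ∈ skewCells lam mu
    · exact congrArg PNat.val (h c hc)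
    · rw [T.outside c hc, T'.outside c hc]
  cases T
  cases T'
  congr

/-- The tableau with given values on the cells. -/
def ofValues (k : ℕ × ℕ → ℕ+)
    (row : ∀ i j, (i, j) ∈ skewCells lam mu → (i, j + 1) ∈ skewCells lam mu →
      k (i, j) ≤ k (i, j + 1))
    (col : ∀ i j, (i, j) ∈ skewCells lam mu → (i + 1, j) ∈ skewCells lam mu →
      k (i, j) < k (i + 1, j)) : SkewSSYT lam mu where
  entry c := if c ∈ skewCells lam mu then k c else 0
  outside c hc := if_neg hc
  pos c hc := by rw [if_pos hc]; exact (k c).pos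
  rowWeak i j h h' := by rw [if_pos h, if_pos h']; exact row i j h h'
  colStrict i j h h' := by rw [if_pos h, if_pos h']; exact col i j h h'

theorem value_ofValues {k : ℕ × ℕ → ℕ+} {row col} {c : ℕ × ℕ} (hc : c ∈ skewCells lam mu) :
    (ofValues k row col).value c hc = k c :=
  PNat.eq (if_pos hc)

/-- The multiset of entries. -/
def content (T : SkewSSYT lam mu) : Multiset ℕ :=
  (skewCells lam mu).val.map T.entry

end SkewSSYT

section Letters

/-- The code of the letter `k` (for `false`) or `k'` (for `true`), meaningful for `0 < k`. -/
def letter (ε : Bool) (k : ℕ) : ℕ := 2 * k - ε.toNat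

/-- The letter with code `n`, its prime disregarded. -/
def letterAbs (n : ℕ) : ℕ := (n + 1) / 2

/-- Whether `n` is the code of a primed letter. -/
def letterSign (n : ℕ) : Bool := decide (Odd n)

theorem letter_letterSign_letterAbs (n : ℕ) : letter (letterSign n) (letterAbs n) = n := by
  cases h : letterSign n <;> grind [letter, letterAbs, letterSign, Bool.toNat]

theorem letterAbs_letter (ε : Bool) (k : ℕ) : letterAbs (letter ε k) = k := by
  cases ε <;> grind [letter, letterAbs]

theorem letterSign_letter (ε : Bool) {k : ℕ} (hk : 0 < k) : letterSign (letter ε k) = ε := by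
  cases ε <;> grind [letter, letterSign]

theorem letter_pos (ε : Bool) {k : ℕ} (hk : 0 < k) : 0 < letter ε k := by
  cases ε <;> grind [letter]

theorem letterAbs_pos {n : ℕ} (hn : 0 < n) : 0 < letterAbs n := by
  unfold letterAbs
  omega

theorem letterAbs_signedLE_row (m n : ℕ) :
    SignedLE (letterSign n) (letterAbs m) (letterAbs n) ↔ m ≤ n ∧ (m = n → Even m) := by
  cases h : letterSign n <;> grind [letterSign, letterAbs, SignedLE]

theorem letterAbs_signedLE_col (m n : ℕ) :
    SignedLE (!letterSign m) (letterAbs m) (letterAbs n) ↔ m ≤ n ∧ (m = n → Odd m) := by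
  cases h : letterSign m <;> grind [letterSign, letterAbs, SignedLE]

end Letters

namespace ShiftedSSYT

variable {lam : List ℕ}

/-- The entry of a cell, its prime disregarded, as a positive integer. -/
def value (S : ShiftedSSYT lam) (c : ℕ × ℕ) (hc : c ∈ shiftedCells lam) : ℕ+ :=
  ⟨letterAbs (S.entry c), letterAbs_pos (S.pos c hc)⟩

/-- Whether the entry of a cell is primed. -/
def sign (S : ShiftedSSYT lam) (c : ℕ × ℕ) : Bool :=
  letterSign (S.entry c)

theorem ext_of_value_of_sign {S S' : ShiftedSSYT lam}
    (hvalue : ∀ c hc, S.value c hc = S'.value c hc)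
    (hsign : ∀ c ∈ shiftedCells lam, S.sign c = S'.sign c) : S = S' := by
  have entry_eq : S.entry = S'.entry := by
    funext c
    by_cases hc : c ∈ shiftedCells lam
    · have habs : letterAbs (S.entry c) = letterAbs (S'.entry c) :=
        congrArg PNat.val (hvalue c hc)
      rw [← letter_letterSign_letterAbs (S.entry c), ← letter_letterSign_letterAbs (S'.entry c),
        habs, show letterSign (S.entry c) = letterSign (S'.entry c) from hsign c hc]
    · rw [S.outside c hc, S'.outside c hc]
  cases S
  cases S'
  congr

theorem value_row (S : ShiftedSSYT lam) {i j : ℕ} (h : (i, j) ∈ shiftedCells lam)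
    (h' : (i, j + 1) ∈ shiftedCells lam) :
    SignedLE (S.sign (i, j + 1)) (S.value (i, j) h) (S.value (i, j + 1) h') :=
  signedLE_coe_pnat.mp ((letterAbs_signedLE_row _ _).mpr ⟨S.rowWeak i j h h', S.rowPrime i j h h'⟩)

theorem value_col (S : ShiftedSSYT lam) {i j : ℕ} (h : (i, j) ∈ shiftedCells lam)
    (h' : (i + 1, j) ∈ shiftedCells lam) :
    SignedLE (!S.sign (i, j)) (S.value (i, j) h) (S.value (i + 1, j) h') :=
  signedLE_coe_pnat.mp ((letterAbs_signedLE_col _ _).mpr ⟨S.colWeak i j h h', S.colPrime i j h h'⟩)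

theorem sign_diag (S : ShiftedSSYT lam) {i : ℕ} (h : (i, i) ∈ shiftedCells lam) :
    S.sign (i, i) = false :=
  decide_eq_false (Nat.not_odd_iff_even.mpr (S.diag i h))

/-- The tableau with given values and signs on the cells. -/
def ofValues (k : ℕ × ℕ → ℕ+) (ε : ℕ × ℕ → Bool)
    (row : ∀ i j, (i, j) ∈ shiftedCells lam → (i, j + 1) ∈ shiftedCells lam →
      SignedLE (ε (i, j + 1)) (k (i, j)) (k (i, j + 1)))
    (col : ∀ i j, (i, j) ∈ shiftedCells lam → (i + 1, j) ∈ shiftedCells lam →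
      SignedLE (!ε (i, j)) (k (i, j)) (k (i + 1, j)))
    (diag : ∀ i, (i, i) ∈ shiftedCells lam → ε (i, i) = false) : ShiftedSSYT lam :=
  have row' (i j) (h : (i, j) ∈ shiftedCells lam) (h' : (i, j + 1) ∈ shiftedCells lam) :=
    (letterAbs_signedLE_row (letter (ε (i, j)) (k (i, j)))
      (letter (ε (i, j + 1)) (k (i, j + 1)))).mp <| by
        rw [letterAbs_letter, letterAbs_letter, letterSign_letter _ (k _).pos]
        exact signedLE_coe_pnat.mpr (row i j h h')
  have col' (i j) (h : (i, j) ∈ shiftedCells lam) (h' : (i + 1, j) ∈ shiftedCells lam) :=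
    (letterAbs_signedLE_col (letter (ε (i, j)) (k (i, j)))
      (letter (ε (i + 1, j)) (k (i + 1, j)))).mp <| by
        rw [letterAbs_letter, letterAbs_letter, letterSign_letter _ (k _).pos]
        exact signedLE_coe_pnat.mpr (col i j h h')
  { entry c := if c ∈ shiftedCells lam then letter (ε c) (k c) else 0
    outside c hc := if_neg hc
    pos c hc := by rw [if_pos hc]; exact letter_pos (ε c) (k c).pos
    rowWeak i j h h' := by simpa only [if_pos h, if_pos h'] using (row' i j h h').1
    rowPrime i j h h' := by simpa only [if_pos h, if_pos h'] using (row' i j h h').2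
    colWeak i j h h' := by simpa only [if_pos h, if_pos h'] using (col' i j h h').1
    colPrime i j h h' := by simpa only [if_pos h, if_pos h'] using (col' i j h h').2
    diag i h := by
      rw [if_pos h, diag i h]
      exact even_two_mul _ }

theorem value_ofValues {k : ℕ × ℕ → ℕ+} {ε : ℕ × ℕ → Bool} {row col diag} {c : ℕ × ℕ}
    (hc : c ∈ shiftedCells lam) : (ofValues k ε row col diag).value c hc = k c :=
  PNat.eq ((congrArg letterAbs (if_pos hc)).trans (letterAbs_letter (ε c) (k c)))

theorem sign_ofValues {k : ℕ × ℕ → ℕ+} {ε : ℕ × ℕ → Bool} {row col diag} {c : ℕ × ℕ}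
    (hc : c ∈ shiftedCells lam) : (ofValues (lam := lam) k ε row col diag).sign c = ε c :=
  (congrArg letterSign (if_pos hc)).trans (letterSign_letter (ε c) (k c).pos)

/-- The multiset of entries, primes disregarded. -/
def content (S : ShiftedSSYT lam) : Multiset ℕ :=
  (shiftedCells lam).val.map fun c => letterAbs (S.entry c)

end ShiftedSSYT

theorem skewSchur_eq_schurP_of_equiv {lam mu nu : List ℕ} (e : SkewSSYT lam mu ≃ ShiftedSSYT nu)
    (he : ∀ T, (e T).content = T.content) : skewSchur lam mu = schurP nu := by
  have skew_count (T : SkewSSYT lam mu) (k : ℕ) :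
      ((skewCells lam mu).filter fun c => T.entry c = k).card = T.content.count k := by
    simp only [SkewSSYT.content, Multiset.count_map, eq_comm (a := k)]
    rfl
  have shifted_count (S : ShiftedSSYT nu) (k : ℕ) :
      ((shiftedCells nu).filter fun c => (S.entry c + 1) / 2 = k).card = S.content.count k := by
    simp only [ShiftedSSYT.content, Multiset.count_map, eq_comm (a := k)]
    rfl
  funext m
  refine congrArg Nat.cast (Nat.card_congr (e.subtypeEquiv fun T => ?_))
  simp only [skew_count, shifted_count, he]

section Shape321

theorem skewCells_321_1_val :
    (skewCells [3, 2, 1] [1]).val = {(2, 0), (1, 0), (1, 1), (0, 1), (0, 2)} := by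
  decide

theorem mem_skewCells_321_1 {c : ℕ × ℕ} : c ∈ skewCells [3, 2, 1] [1] ↔
    c = (2, 0) ∨ c = (1, 0) ∨ c = (1, 1) ∨ c = (0, 1) ∨ c = (0, 2) := by
  simp [← Finset.mem_val, skewCells_321_1_val]

theorem forall_row_skewCells_321_1 {P : ℕ → ℕ → Prop} :
    (∀ i j, (i, j) ∈ skewCells [3, 2, 1] [1] → (i, j + 1) ∈ skewCells [3, 2, 1] [1] → P i j) ↔
      P 0 1 ∧ P 1 0 := by
  simp only [mem_skewCells_321_1, Prod.mk.injEq]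
  constructor
  · exact fun h => ⟨h 0 1 (by simp) (by simp), h 1 0 (by simp) (by simp)⟩
  · grind

theorem forall_col_skewCells_321_1 {P : ℕ → ℕ → Prop} :
    (∀ i j, (i, j) ∈ skewCells [3, 2, 1] [1] → (i + 1, j) ∈ skewCells [3, 2, 1] [1] → P i j) ↔
      P 0 1 ∧ P 1 0 := by
  simp only [mem_skewCells_321_1, Prod.mk.injEq]
  constructor
  · exact fun h => ⟨h 0 1 (by simp) (by simp), h 1 0 (by simp) (by simp)⟩
  · grind

/-- The reading word of a tableau, from the lower left to the upper right end of the ribbon. -/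
def SkewSSYT.equivZigzagWord : SkewSSYT [3, 2, 1] [1] ≃ ZigzagWord ℕ+ where
  toFun T :=
    ⟨T.value (2, 0) (by decide), T.value (1, 0) (by decide), T.value (1, 1) (by decide),
      T.value (0, 1) (by decide), T.value (0, 2) (by decide),
      T.colStrict 1 0 (by decide) (by decide), T.rowWeak 1 0 (by decide) (by decide),
      T.colStrict 0 1 (by decide) (by decide), T.rowWeak 0 1 (by decide) (by decide)⟩
  invFun w :=
    ofValues
      (fun
        | (2, 0) => w.w₁
        | (1, 0) => w.w₂
        | (1, 1) => w.w₃
        | (0, 1) => w.w₄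
        | (0, 2) => w.w₅
        | _ => 1)
      (forall_row_skewCells_321_1.mpr ⟨w.w₄_le_w₅, w.w₂_le_w₃⟩)
      (forall_col_skewCells_321_1.mpr ⟨w.w₄_lt_w₃, w.w₂_lt_w₁⟩)
  left_inv T := by
    refine ext_of_value fun c hc => (value_ofValues hc).trans ?_
    obtain rfl | rfl | rfl | rfl | rfl := mem_skewCells_321_1.mp hc <;> rfl
  right_inv w := by
    ext1 <;> exact value_ofValues (by decide)

theorem SkewSSYT.content_equivZigzagWord (T : SkewSSYT [3, 2, 1] [1]) :
    (equivZigzagWord T).content.map PNat.val = T.content := by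
  rw [content, skewCells_321_1_val]
  rfl

end Shape321

section Shape32

theorem shiftedCells_32_val :
    (shiftedCells [3, 2]).val = {(0, 0), (0, 1), (0, 2), (1, 1), (1, 2)} := by
  decide

theorem mem_shiftedCells_32 {c : ℕ × ℕ} : c ∈ shiftedCells [3, 2] ↔
    c = (0, 0) ∨ c = (0, 1) ∨ c = (0, 2) ∨ c = (1, 1) ∨ c = (1, 2) := by
  simp [← Finset.mem_val, shiftedCells_32_val]

theorem forall_row_shiftedCells_32 {P : ℕ → ℕ → Prop} :
    (∀ i j, (i, j) ∈ shiftedCells [3, 2] → (i, j + 1) ∈ shiftedCells [3, 2] → P i j) ↔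
      P 0 0 ∧ P 0 1 ∧ P 1 1 := by
  simp only [mem_shiftedCells_32, Prod.mk.injEq]
  constructor
  · exact fun h =>
      ⟨h 0 0 (by simp) (by simp), h 0 1 (by simp) (by simp), h 1 1 (by simp) (by simp)⟩
  · grind

theorem forall_col_shiftedCells_32 {P : ℕ → ℕ → Prop} :
    (∀ i j, (i, j) ∈ shiftedCells [3, 2] → (i + 1, j) ∈ shiftedCells [3, 2] → P i j) ↔
      P 0 1 ∧ P 0 2 := by
  simp only [mem_shiftedCells_32, Prod.mk.injEq]
  constructor
  · exact fun h => ⟨h 0 1 (by simp) (by simp), h 0 2 (by simp) (by simp)⟩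
  · grind

theorem forall_diag_shiftedCells_32 {P : ℕ → Prop} :
    (∀ i, (i, i) ∈ shiftedCells [3, 2] → P i) ↔ P 0 ∧ P 1 := by
  simp only [mem_shiftedCells_32, Prod.mk.injEq]
  constructor
  · exact fun h => ⟨h 0 (by simp), h 1 (by simp)⟩
  · grind

/-- Tableaux of shifted shape `(3,2)` in terms of letters and signs; the diagonal entries `p`, `s`
carry no sign, being unprimed. -/
def ShiftedSSYT.equivShiftedFilling : ShiftedSSYT [3, 2] ≃ ShiftedFilling ℕ+ where
  toFun S :=
    ⟨S.value (0, 0) (by decide), S.value (0, 1) (by decide), S.value (0, 2) (by decide),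
      S.value (1, 1) (by decide), S.value (1, 2) (by decide),
      S.sign (0, 1), S.sign (0, 2), S.sign (1, 2),
      S.value_row _ _, S.value_row _ _, S.value_row _ _, S.value_col _ _, S.value_col _ _⟩
  invFun F :=
    ofValues
      (fun
        | (0, 0) => F.p
        | (0, 1) => F.q
        | (0, 2) => F.r
        | (1, 1) => F.s
        | (1, 2) => F.t
        | _ => 1)
      (fun
        | (0, 1) => F.qSign
        | (0, 2) => F.rSign
        | (1, 2) => F.tSign
        | _ => false)
      (forall_row_shiftedCells_32.mpr ⟨F.p_le_q, F.q_le_r, F.s_le_t⟩)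
      (forall_col_shiftedCells_32.mpr ⟨F.q_le_s, F.r_le_t⟩)
      (forall_diag_shiftedCells_32.mpr ⟨rfl, rfl⟩)
  left_inv S := by
    refine ext_of_value_of_sign (fun c hc => (value_ofValues hc).trans ?_)
      (fun c hc => (sign_ofValues hc).trans ?_)
    · obtain rfl | rfl | rfl | rfl | rfl := mem_shiftedCells_32.mp hc <;> rfl
    · obtain rfl | rfl | rfl | rfl | rfl := mem_shiftedCells_32.mp hc
      · exact (S.sign_diag hc).symm
      · rfl
      · rfl
      · exact (S.sign_diag hc).symm
      · rfl
  right_inv F := by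
    ext1
    iterate 5 exact value_ofValues (by decide)
    iterate 3 exact sign_ofValues (by decide)

theorem ShiftedSSYT.content_equivShiftedFilling (S : ShiftedSSYT [3, 2]) :
    (equivShiftedFilling S).content.map PNat.val = S.content := by
  rw [content, shiftedCells_32_val]
  rfl

end Shape32

theorem skewSchur_staircase_321_1 :
    skewSchur [3, 2, 1] [1] = schurP [3, 2] := by
  let e : SkewSSYT [3, 2, 1] [1] ≃ ShiftedSSYT [3, 2] :=
    SkewSSYT.equivZigzagWord.trans
      (ZigzagWord.equivShiftedFilling.trans ShiftedSSYT.equivShiftedFilling.symm)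
  refine skewSchur_eq_schurP_of_equiv e fun T => ?_
  let w : ZigzagWord ℕ+ := T.equivZigzagWord
  calc (e T).content
    _ = (ShiftedSSYT.equivShiftedFilling (e T)).content.map PNat.val :=
      (ShiftedSSYT.content_equivShiftedFilling _).symm
    _ = (ZigzagWord.equivShiftedFilling w).content.map PNat.val := by
      rw [show ShiftedSSYT.equivShiftedFilling (e T) = ZigzagWord.equivShiftedFilling w from
        Equiv.apply_symm_apply _ _]
    _ = w.content.map PNat.val := by rw [w.content_equivShiftedFilling]
    _ = T.content := T.content_equivZigzagWord

end
end

section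
/- The skew Schur function s_{δ_4/δ_2} = s_{(4,3,2,1)/(2,1)} equals P_{(4,3)} + P_{(4,2,1)}, as an identity of formal power series in x₁, x₂, …. -/
/-!
STATEMENT 11: s_{δ₄/δ₂} = s_{(4,3,2,1)/(2,1)} = P_{(4,3)} + P_{(4,2,1)}.
-/

noncomputable section

/-!
A semistandard filling is a `(P, ω)`-partition of its diagram. A marked shifted tableau splits into
its set `M` of primed cells and its unprimed entries, which form a `(P, ω)`-partition of the shifted
diagram for a labelling `ω` depending on `M`. By Stanley's theorem the generating function of
`(P, ω)`-partitions is the sum of Gessel's fundamental quasisymmetric functions over the linear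
extensions of `P`, so the identity follows from an equality of two multisets of ascent patterns:
the 272 standard fillings of the skew shape on the left, and `5 * 2 ^ 5 + 7 * 2 ^ 4` marked standard
shifted fillings on the right.
-/

section PPartitions

variable {α ι : Type*} [LinearOrder ι]

/-- A `(P, ω)`-partition in Stanley's sense, in the order-preserving convention, on the poset
generated on `D` by the relation `r`: the parts `y c` increase weakly along `r`, and strictly where
the labelling `ω` decreases. Parts are positive, and `y` is extended by `0` outside `D`. -/
structure IsPPartition (r : α → α → Prop) (D : Finset α) (ω : α → ι) (y : α → ℕ) : Prop where
  outside : ∀ c ∉ D, y c = 0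
  pos : ∀ c ∈ D, 0 < y c
  lt : ∀ c ∈ D, ∀ d ∈ D, r c d → toLex (y c, ω c) < toLex (y d, ω d)

/-- The `(P, ω)`-partitions with exactly `m k` parts equal to `k`. -/
def pPartitions (r : α → α → Prop) (D : Finset α) (ω : α → ι) (m : ℕ →₀ ℕ) : Set (α → ℕ) :=
  {y | IsPPartition r D ω y ∧ ∀ k, (D.filter (y · = k)).card = m k}

/-- The quasisymmetric generating function of the `(P, ω)`-partitions, with `X k` recording the
parts equal to `k`. -/
def pPartitionSeries (r : α → α → Prop) (D : Finset α) (ω : α → ι) : MvPowerSeries ℕ ℚ :=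
  fun m => Nat.card (pPartitions r D ω m)

/-- The linear extensions of the relation `r` on `D`, as enumerations of `D` in which no element
comes after one of its `r`-successors. -/
def linearExtensions (r : α → α → Prop) [DecidableRel r] (D : Finset α) : Finset (List α) :=
  Finset.filter (fun w => w.Pairwise fun c d => ¬ r d c)
    ⟨D.val.lists, Multiset.lists_nodup_finset D⟩

/-- The ascent pattern of a word: its `i`-th entry records whether the `i`-th letter is smaller
than the next one. -/
def ascents (l : List ι) : List Bool :=
  List.zipWith (fun a b => decide (a < b)) l l.tail

/-- The ascent patterns of the label words of the linear extensions, with multiplicity. -/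
def ascentPatterns (r : α → α → Prop) [DecidableRel r] (D : Finset α) (ω : α → ι) :
    Multiset (List Bool) :=
  (linearExtensions r D).val.map fun w => ascents (w.map ω)

/-- A sequence is compatible with an ascent pattern `a` of length one less if it increases weakly,
and strictly at the positions where `a` has no ascent. -/
def IsCompatible : List ℕ → List Bool → Prop
  | [_], [] => True
  | x :: y :: Y, b :: a => (x < y ∨ x = y ∧ b) ∧ IsCompatible (y :: Y) a
  | _, _ => False

/-- The sequence `i₁ ≤ ⋯ ≤ i_d` for which `x ^ m` is the monomial `x_{i₁} ⋯ x_{i_d}`. -/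
def sortedIndices (m : ℕ →₀ ℕ) : List ℕ :=
  (Finsupp.toMultiset m).sort

open scoped Classical in
/-- Gessel's fundamental quasisymmetric function in the variables `X 1, X 2, …`, indexed by an
ascent pattern: the sum of the monomials whose weakly increasing sequence of indices is compatible
with the pattern. -/
def fundamentalQSym (a : List Bool) : MvPowerSeries ℕ ℚ := fun m =>
  if 0 ∉ sortedIndices m ∧ IsCompatible (sortedIndices m) a then 1 else 0

theorem mem_linearExtensions {r : α → α → Prop} [DecidableRel r] {D : Finset α} {w : List α} :
    w ∈ linearExtensions r D ↔ (w : Multiset α) = D.val ∧ w.Pairwise fun c d => ¬ r d c := by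
  simp only [linearExtensions, Finset.mem_filter, Finset.mem_mk, Multiset.mem_lists_iff, eq_comm,
    Multiset.quot_mk_to_coe]

theorem mem_iff_of_coe_eq_val {D : Finset α} {w : List α} (hw : (w : Multiset α) = D.val) {c : α} :
    c ∈ w ↔ c ∈ D := by
  rw [← Finset.mem_val, ← hw, Multiset.mem_coe]

theorem nodup_of_coe_eq_val {D : Finset α} {w : List α} (hw : (w : Multiset α) = D.val) :
    w.Nodup :=
  Multiset.coe_nodup.mp (hw ▸ D.nodup)

theorem ne_nil_of_coe_eq_val {D : Finset α} {w : List α} (hD : D.Nonempty)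
    (hw : (w : Multiset α) = D.val) : w ≠ [] := by
  rintro rfl
  exact hD.ne_empty (Finset.val_eq_zero.mp hw.symm)

/-- `Multiset.lists` goes through `List.permutations`, whose well-founded recursion the kernel does
not evaluate; `List.permutations'` is structurally recursive. -/
theorem linearExtensions_val {r : α → α → Prop} [DecidableRel r] {D : Finset α} {l : List α}
    (hl : (l : Multiset α) = D.val) :
    (linearExtensions r D).val =
      ↑(l.permutations'.filter fun w => w.Pairwise fun c d => ¬ r d c) := by
  change D.val.lists.filter _ = _
  rw [← hl, Multiset.lists_coe,
    Multiset.coe_eq_coe.mpr (List.permutations_perm_permutations' l), Multiset.filter_coe]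

theorem IsCompatible.length_eq : ∀ {Y : List ℕ} {a : List Bool},
    IsCompatible Y a → Y.length = a.length + 1
  | [_], [], _ => rfl
  | _ :: _ :: _, _ :: _, h => congrArg (· + 1) h.2.length_eq

theorem isCompatible_map_ascents (y : α → ℕ) (ω : α → ι) : ∀ {w : List α}, w ≠ [] →
    (IsCompatible (w.map y) (ascents (w.map ω)) ↔
      w.Pairwise fun c d => toLex (y c, ω c) < toLex (y d, ω d))
  | [c], _ => by simp [IsCompatible, ascents]
  | c :: d :: w, _ => by
    have ih := isCompatible_map_ascents y ω (List.cons_ne_nil d w)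
    rw [← List.pairwise_map (R := (· < ·)), ← List.isChain_iff_pairwise] at ih ⊢
    simp only [List.map_cons, List.isChain_cons_cons, Prod.Lex.toLex_lt_toLex] at ih ⊢
    rw [← ih]
    simp [IsCompatible, ascents]

theorem pairwise_not_flip_iff_of_pairwise_lt {β : Type*} [Preorder β] {r : α → α → Prop}
    (hr : ∀ c, ¬ r c c) {k : α → β} {w : List α} (hw : w.Pairwise fun c d => k c < k d) :
    (w.Pairwise fun c d => ¬ r d c) ↔ ∀ c ∈ w, ∀ d ∈ w, r c d → k c < k d := by
  refine ⟨fun h => ?_, fun h => hw.imp_of_mem fun hc hd hlt hrel =>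
    (h _ hd _ hc hrel).not_gt hlt⟩
  have hsymm : w.Pairwise fun c d => (r c d → k c < k d) ∧ (r d c → k d < k c) :=
    (hw.and h).imp fun h => ⟨fun _ => h.1, fun hrel => (h.2 hrel).elim⟩
  have : Std.Symm fun c d => (r c d → k c < k d) ∧ (r d c → k d < k c) := ⟨fun _ _ h => h.symm⟩
  exact fun c hc d hd =>
    (hsymm.forall_of_forall (fun c _ => ⟨fun h => (hr c h).elim, fun h => (hr c h).elim⟩) hc hd).1

theorem isPPartition_iff_of_pairwise_lt {r : α → α → Prop} [DecidableRel r] (hr : ∀ c, ¬ r c c)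
    {D : Finset α} {ω : α → ι} {y : α → ℕ} {w : List α} (hwD : (w : Multiset α) = D.val)
    (hw : w.Pairwise fun c d => toLex (y c, ω c) < toLex (y d, ω d)) :
    IsPPartition r D ω y ↔
      ((∀ c ∉ D, y c = 0) ∧ 0 ∉ w.map y) ∧ w ∈ linearExtensions r D := by
  rw [mem_linearExtensions, pairwise_not_flip_iff_of_pairwise_lt hr hw]
  simp only [mem_iff_of_coe_eq_val hwD, hwD, List.mem_map, true_and, not_exists, not_and, ← ne_eq,
    ← Nat.pos_iff_ne_zero]
  exact ⟨fun h => ⟨⟨h.outside, h.pos⟩, h.lt⟩, fun h => ⟨h.1.1, h.1.2, h.2⟩⟩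

theorem exists_pairwise_lex (D : Finset α) {ω : α → ι} (hω : Function.Injective ω) (y : α → ℕ) :
    ∃ w : List α, (w : Multiset α) = D.val ∧
      w.Pairwise fun c d => toLex (y c, ω c) < toLex (y d, ω d) := by
  classical
  let key : α → ℕ ×ₗ ι := fun c => toLex (y c, ω c)
  have hkey : Function.Injective key := fun c d h => hω (congrArg (fun p => (ofLex p).2) h)
  let w := D.toList.insertionSort (Order.Preimage key (· ≤ ·))
  have hperm : w.Perm D.toList := List.perm_insertionSort _ _
  have hnodup : w.Nodup := hperm.nodup_iff.mpr D.nodup_toList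
  refine ⟨w, (Multiset.coe_eq_coe.mpr hperm).trans D.coe_toList, ?_⟩
  exact ((List.pairwise_insertionSort (Order.Preimage key (· ≤ ·)) D.toList).and hnodup).imp
    fun h => lt_of_le_of_ne h.1 (hkey.ne h.2)

theorem map_val_eq_sortedIndices_iff {D : Finset α} {m : ℕ →₀ ℕ} {y : α → ℕ} :
    D.val.map y = sortedIndices m ↔ ∀ k, (D.filter (y · = k)).card = m k := by
  simp only [sortedIndices, Multiset.sort_eq, Multiset.ext, Finsupp.count_toMultiset,
    Multiset.count_map, Finset.card_def, Finset.filter_val, eq_comm]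

section WordFun

variable [DecidableEq α]

/-- The function whose values along the word `w` are `Y`, extended by `0` to the other letters. -/
def wordFun (Y : List ℕ) (w : List α) (c : α) : ℕ :=
  Y.getD (w.idxOf c) 0

theorem wordFun_eq_zero {Y : List ℕ} {w : List α} (hlen : Y.length = w.length) {c : α}
    (hc : c ∉ w) : wordFun Y w c = 0 := by
  rw [wordFun, List.idxOf_of_notMem hc, List.getD_eq_default _ _ hlen.le]

theorem map_wordFun {Y : List ℕ} {w : List α} (hlen : Y.length = w.length) (hw : w.Nodup) :
    w.map (wordFun Y w) = Y :=
  List.ext_getElem (by rw [List.length_map, hlen]) fun i hi hY => by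
    simp [wordFun, hw.idxOf_getElem, hY]

theorem wordFun_map {w : List α} (hw : w.Nodup) {y : α → ℕ} (hy : ∀ c ∉ w, y c = 0) :
    wordFun (w.map y) w = y := by
  have hlen : (w.map y).length = w.length := List.length_map _
  funext c
  by_cases hc : c ∈ w
  · exact List.map_inj_left.mp (map_wordFun hlen hw) c hc
  · rw [wordFun_eq_zero hlen hc, hy c hc]

theorem wordFun_spec_of_isCompatible {ω : α → ι} {Y : List ℕ} {w : List α} (hne : w ≠ [])
    (hw : w.Nodup) (hY : IsCompatible Y (ascents (w.map ω))) :
    (∀ c ∉ w, wordFun Y w c = 0) ∧ w.map (wordFun Y w) = Y ∧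
      w.Pairwise fun c d => toLex (wordFun Y w c, ω c) < toLex (wordFun Y w d, ω d) := by
  have hlen : Y.length = w.length := by
    have hpos := List.length_pos_iff.mpr hne
    have hlen := hY.length_eq
    simp only [ascents, List.length_zipWith, List.length_tail, List.length_map] at hlen
    omega
  have hmap : w.map (wordFun Y w) = Y := map_wordFun hlen hw
  exact ⟨fun c hc => wordFun_eq_zero hlen hc, hmap,
    (isCompatible_map_ascents _ ω hne).mp (hmap.symm ▸ hY)⟩

variable {r : α → α → Prop} [DecidableRel r] {D : Finset α} {ω : α → ι} {Y : List ℕ}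

theorem mapsTo_wordFun (hr : ∀ c, ¬ r c c) (hD : D.Nonempty) :
    Set.MapsTo (wordFun Y)
      {w | w ∈ linearExtensions r D ∧ 0 ∉ Y ∧ IsCompatible Y (ascents (w.map ω))}
      {y | IsPPartition r D ω y ∧ D.val.map y = Y} := by
  rintro w ⟨hw, h0, hY⟩
  have hwD := (mem_linearExtensions.mp hw).1
  obtain ⟨hout, hmap, hlt⟩ :=
    wordFun_spec_of_isCompatible (ne_nil_of_coe_eq_val hD hwD) (nodup_of_coe_eq_val hwD) hY
  refine ⟨(isPPartition_iff_of_pairwise_lt hr hwD hlt).mpr ⟨⟨fun c hc => ?_, ?_⟩, hw⟩, ?_⟩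
  · exact hout c (mt (mem_iff_of_coe_eq_val hwD).mp hc)
  · rwa [hmap]
  · rw [← hwD, Multiset.map_coe, hmap]

theorem injOn_wordFun (hD : D.Nonempty) :
    Set.InjOn (wordFun Y)
      {w | w ∈ linearExtensions r D ∧ 0 ∉ Y ∧ IsCompatible Y (ascents (w.map ω))} := by
  have hlex {w : List α} (hw : w ∈ linearExtensions r D)
      (hY : IsCompatible Y (ascents (w.map ω))) :
      w.Pairwise fun c d => toLex (wordFun Y w c, ω c) < toLex (wordFun Y w d, ω d) :=
    have hwD := (mem_linearExtensions.mp hw).1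
    (wordFun_spec_of_isCompatible (ne_nil_of_coe_eq_val hD hwD)
      (nodup_of_coe_eq_val hwD) hY).2.2
  rintro w ⟨hw, _, hY⟩ w' ⟨hw', _, hY'⟩ heq
  have hperm : w.Perm w' := Multiset.coe_eq_coe.mp
    ((mem_linearExtensions.mp hw).1.trans (mem_linearExtensions.mp hw').1.symm)
  exact hperm.eq_of_pairwise (fun _ _ _ _ h h' => (lt_asymm h h').elim) (heq ▸ hlex hw hY)
    (hlex hw' hY')

theorem surjOn_wordFun (hr : ∀ c, ¬ r c c) (hD : D.Nonempty) (hω : Function.Injective ω)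
    (hY : Y.Pairwise (· ≤ ·)) :
    Set.SurjOn (wordFun Y)
      {w | w ∈ linearExtensions r D ∧ 0 ∉ Y ∧ IsCompatible Y (ascents (w.map ω))}
      {y | IsPPartition r D ω y ∧ D.val.map y = Y} := by
  rintro y ⟨hy, hyY⟩
  obtain ⟨w, hwD, hlt⟩ := exists_pairwise_lex D hω y
  have hmap : w.map y = Y := by
    have hperm : (w.map y).Perm Y := by
      rw [← Multiset.coe_eq_coe, ← hyY, ← hwD, Multiset.map_coe]
    have hle : (w.map y).Pairwise (· ≤ ·) :=
      List.pairwise_map.mpr (hlt.imp fun h => (Prod.Lex.toLex_lt_toLex'.mp h).1)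
    exact hperm.eq_of_pairwise' hle hY
  subst hmap
  obtain ⟨⟨hout, h0⟩, hw⟩ := (isPPartition_iff_of_pairwise_lt hr hwD hlt).mp hy
  have hcompat := (isCompatible_map_ascents y ω (ne_nil_of_coe_eq_val hD hwD)).mpr hlt
  exact ⟨w, ⟨hw, h0, hcompat⟩, wordFun_map (nodup_of_coe_eq_val hwD) fun c hc =>
    hout c (mt (mem_iff_of_coe_eq_val hwD).mpr hc)⟩

theorem bijOn_wordFun (hr : ∀ c, ¬ r c c) (hD : D.Nonempty) (hω : Function.Injective ω)
    (m : ℕ →₀ ℕ) :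
    Set.BijOn (wordFun (sortedIndices m))
      {w | w ∈ linearExtensions r D ∧
        0 ∉ sortedIndices m ∧ IsCompatible (sortedIndices m) (ascents (w.map ω))}
      (pPartitions r D ω m) := by
  simp only [pPartitions, ← map_val_eq_sortedIndices_iff]
  exact ⟨mapsTo_wordFun hr hD, injOn_wordFun hD,
    surjOn_wordFun hr hD hω (Multiset.pairwise_sort _ _)⟩

end WordFun

variable {r : α → α → Prop} {D : Finset α} {ω : α → ι}

theorem finite_pPartitions (hr : ∀ c, ¬ r c c) (hD : D.Nonempty) (hω : Function.Injective ω)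
    (m : ℕ →₀ ℕ) : (pPartitions r D ω m).Finite := by
  classical
  exact (bijOn_wordFun hr hD hω m).finite_iff_finite.mp <|
    (linearExtensions r D).finite_toSet.subset fun _ hw => hw.1

theorem pPartitionSeries_eq_sum_fundamentalQSym [DecidableRel r] (hr : ∀ c, ¬ r c c)
    (hD : D.Nonempty) (hω : Function.Injective ω) :
    pPartitionSeries r D ω = ((ascentPatterns r D ω).map fundamentalQSym).sum := by
  classical
  have hsum : ((ascentPatterns r D ω).map fundamentalQSym).sum =
      ∑ w ∈ linearExtensions r D, fundamentalQSym (ascents (w.map ω)) :=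
    congrArg Multiset.sum (Multiset.map_map _ _ _)
  ext m
  simp only [hsum, map_sum, MvPowerSeries.coeff_apply, fundamentalQSym, Finset.sum_boole]
  rw [pPartitionSeries, Nat.card_coe_set_eq, ← (bijOn_wordFun hr hD hω m).ncard_eq,
    ← Set.ncard_coe_finset, Finset.coe_filter]

end PPartitions

section Tableaux

/-- The relation generating the order on cells: `d` is the right or the lower neighbour of `c`. -/
def Covers (c d : ℕ × ℕ) : Prop :=
  d = (c.1, c.2 + 1) ∨ d = (c.1 + 1, c.2)

instance : DecidableRel Covers := fun _ _ => inferInstanceAs (Decidable (_ ∨ _))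

theorem not_covers_self (c : ℕ × ℕ) : ¬ Covers c c := by
  simp [Covers, Prod.ext_iff]

/-- A labelling of the cells for which the `(P, ω)`-partitions with respect to `Covers` are the
fillings whose equal entries form a vertical strip on the cells in `M` (the primed ones), followed
by a horizontal strip on the other cells. -/
def label (M : Finset (ℕ × ℕ)) (c : ℕ × ℕ) : Bool ×ₗ ℤ ×ₗ ℤ :=
  if c ∈ M then toLex (false, toLex (c.1, -c.2)) else toLex (true, toLex (-c.1, c.2))

theorem label_injective (M : Finset (ℕ × ℕ)) : Function.Injective (label M) := by
  rintro ⟨i, j⟩ ⟨k, l⟩ h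
  unfold label at h
  split_ifs at h <;> simp_all

theorem label_lt_right_iff (M : Finset (ℕ × ℕ)) (i j : ℕ) :
    label M (i, j) < label M (i, j + 1) ↔ (i, j + 1) ∉ M := by
  unfold label
  split_ifs <;> simp_all [Prod.Lex.toLex_lt_toLex]

theorem label_lt_down_iff (M : Finset (ℕ × ℕ)) (i j : ℕ) :
    label M (i, j) < label M (i + 1, j) ↔ (i, j) ∈ M := by
  unfold label
  split_ifs <;> simp_all [Prod.Lex.toLex_lt_toLex]

theorem isPPartition_label_iff {D M : Finset (ℕ × ℕ)} {y : ℕ × ℕ → ℕ} :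
    IsPPartition Covers D (label M) y ↔
      ((∀ c ∉ D, y c = 0) ∧ ∀ c ∈ D, 0 < y c) ∧
      (∀ i j, (i, j) ∈ D → (i, j + 1) ∈ D →
        y (i, j) < y (i, j + 1) ∨ y (i, j) = y (i, j + 1) ∧ (i, j + 1) ∉ M) ∧
      ∀ i j, (i, j) ∈ D → (i + 1, j) ∈ D →
        y (i, j) < y (i + 1, j) ∨ y (i, j) = y (i + 1, j) ∧ (i, j) ∈ M := by
  have hright (i j : ℕ) :
      toLex (y (i, j), label M (i, j)) < toLex (y (i, j + 1), label M (i, j + 1)) ↔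
      y (i, j) < y (i, j + 1) ∨ y (i, j) = y (i, j + 1) ∧ (i, j + 1) ∉ M := by
    rw [Prod.Lex.toLex_lt_toLex, label_lt_right_iff]
  have hdown (i j : ℕ) :
      toLex (y (i, j), label M (i, j)) < toLex (y (i + 1, j), label M (i + 1, j)) ↔
      y (i, j) < y (i + 1, j) ∨ y (i, j) = y (i + 1, j) ∧ (i, j) ∈ M := by
    rw [Prod.Lex.toLex_lt_toLex, label_lt_down_iff]
  simp only [← hright, ← hdown]
  constructor
  · exact fun h => ⟨⟨h.outside, h.pos⟩, fun i j hc hd => h.lt _ hc _ hd (Or.inl rfl),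
      fun i j hc hd => h.lt _ hc _ hd (Or.inr rfl)⟩
  · rintro ⟨⟨hout, hpos⟩, hrow, hcol⟩
    refine ⟨hout, hpos, ?_⟩
    rintro ⟨i, j⟩ hc _ hd (rfl | rfl)
    exacts [hrow i j hc hd, hcol i j hc hd]

theorem skewSchur_eq_pPartitionSeries (lam mu : List ℕ) :
    skewSchur lam mu = pPartitionSeries Covers (skewCells lam mu) (label ∅) := by
  funext m
  refine congrArg Nat.cast (Nat.card_congr ?_)
  refine
    { toFun T := ⟨T.1.entry, isPPartition_label_iff.mpr ?_, T.2⟩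
      invFun y :=
        have h := isPPartition_label_iff.mp y.2.1
        ⟨{ entry := y.1
           outside := h.1.1
           pos := h.1.2
           rowWeak i j hc hd := (h.2.1 i j hc hd).elim le_of_lt fun heq => heq.1.le
           colStrict i j hc hd := by simpa using h.2.2 i j hc hd }, y.2.2⟩
      left_inv _ := rfl
      right_inv _ := rfl }
  exact ⟨⟨T.1.outside, T.1.pos⟩,
    fun i j hc hd => by simpa using (T.1.rowWeak i j hc hd).lt_or_eq,
    fun i j hc hd => Or.inl (T.1.colStrict i j hc hd)⟩

/-- The cells of the shifted diagram that may carry a primed entry. -/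
def offDiagonalCells (lam : List ℕ) : Finset (ℕ × ℕ) :=
  (shiftedCells lam).filter fun c => c.1 ≠ c.2

namespace ShiftedSSYT

variable {lam : List ℕ}

/-- The cells with a primed entry. -/
def primedCells (S : ShiftedSSYT lam) : Finset (ℕ × ℕ) :=
  (shiftedCells lam).filter fun c => Odd (S.entry c)

/-- The entries with their primes removed. -/
def absEntry (S : ShiftedSSYT lam) (c : ℕ × ℕ) : ℕ :=
  (S.entry c + 1) / 2

theorem primedCells_subset (S : ShiftedSSYT lam) : S.primedCells ⊆ offDiagonalCells lam := by
  rintro ⟨i, j⟩ hc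
  obtain ⟨hc, hodd⟩ := Finset.mem_filter.mp hc
  refine Finset.mem_filter.mpr ⟨hc, ?_⟩
  rintro (rfl : i = j)
  exact Nat.not_even_iff_odd.mpr hodd (S.diag i hc)

theorem isPPartition_absEntry (S : ShiftedSSYT lam) :
    IsPPartition Covers (shiftedCells lam) (label S.primedCells) S.absEntry := by
  simp only [isPPartition_label_iff, absEntry, primedCells, Finset.mem_filter]
  refine ⟨⟨fun c hc => by rw [S.outside c hc], fun c hc => ?_⟩, fun i j hc hd => ?_,
    fun i j hc hd => ?_⟩
  · have := S.pos c hc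
    omega
  · have := S.rowWeak i j hc hd
    have := S.rowPrime i j hc hd
    grind
  · have := S.colWeak i j hc hd
    have := S.colPrime i j hc hd
    grind

/-- The tableau with primes on the cells in `M` and underlying unprimed entries `y`. -/
def ofMarked {M : Finset (ℕ × ℕ)} {y : ℕ × ℕ → ℕ} (hM : M ⊆ offDiagonalCells lam)
    (hy : IsPPartition Covers (shiftedCells lam) (label M) y) : ShiftedSSYT lam :=
  have h := isPPartition_label_iff.mp hy
  { entry c := if c ∈ M then 2 * y c - 1 else 2 * y c
    outside c hc := by simp [h.1.1 c hc]
    pos c hc := by have := h.1.2 c hc; grind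
    rowWeak i j hc hd := by have := h.2.1 i j hc hd; grind
    rowPrime i j hc hd := by have := h.2.1 i j hc hd; have := h.1.2 _ hc; grind
    colWeak i j hc hd := by have := h.2.2 i j hc hd; grind
    colPrime i j hc hd := by have := h.2.2 i j hc hd; have := h.1.2 _ hc; grind
    diag i _ := by
      have hi : (i, i) ∉ M := fun hi => (Finset.mem_filter.mp (hM hi)).2 rfl
      simp [hi] }

theorem ofMarked_primedCells_absEntry (S : ShiftedSSYT lam) :
    ofMarked S.primedCells_subset S.isPPartition_absEntry = S := by
  obtain ⟨entry, hout, _⟩ := S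
  simp only [ofMarked, mk.injEq]
  funext c
  have := hout c
  simp only [primedCells, absEntry, Finset.mem_filter]
  grind

theorem absEntry_ofMarked {M : Finset (ℕ × ℕ)} {y : ℕ × ℕ → ℕ} (hM : M ⊆ offDiagonalCells lam)
    (hy : IsPPartition Covers (shiftedCells lam) (label M) y) : (ofMarked hM hy).absEntry = y := by
  funext c
  have hpos (hc : c ∈ M) : 0 < y c := hy.pos c (Finset.mem_filter.mp (hM hc)).1
  simp only [absEntry, ofMarked]
  grind

theorem primedCells_ofMarked {M : Finset (ℕ × ℕ)} {y : ℕ × ℕ → ℕ}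
    (hM : M ⊆ offDiagonalCells lam)
    (hy : IsPPartition Covers (shiftedCells lam) (label M) y) :
    (ofMarked hM hy).primedCells = M := by
  ext c
  have hmem (hc : c ∈ M) : c ∈ shiftedCells lam := (Finset.mem_filter.mp (hM hc)).1
  have hpos := hy.pos c
  simp only [primedCells, ofMarked]
  grind

/-- Splitting a tableau into its set of primed cells and its unprimed entries. -/
def equivMarked (lam : List ℕ) (m : ℕ →₀ ℕ) :
    {S : ShiftedSSYT lam // ∀ k, ((shiftedCells lam).filter (S.absEntry · = k)).card = m k} ≃
      Σ M : (offDiagonalCells lam).powerset,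
        pPartitions Covers (shiftedCells lam) (label M.1) m where
  toFun S := ⟨⟨S.1.primedCells, Finset.mem_powerset.mpr S.1.primedCells_subset⟩,
    S.1.absEntry, S.1.isPPartition_absEntry, S.2⟩
  invFun p := ⟨ofMarked (Finset.mem_powerset.mp p.1.2) p.2.2.1, by
    simpa only [absEntry_ofMarked] using p.2.2.2⟩
  left_inv S := Subtype.ext S.1.ofMarked_primedCells_absEntry
  right_inv p :=
    have hM := Finset.mem_powerset.mp p.1.2
    Sigma.subtype_ext (Subtype.ext (primedCells_ofMarked hM p.2.2.1)) (absEntry_ofMarked hM p.2.2.1)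

end ShiftedSSYT

theorem schurP_eq_sum_pPartitionSeries {lam : List ℕ} (hlam : (shiftedCells lam).Nonempty) :
    schurP lam = ∑ M ∈ (offDiagonalCells lam).powerset,
      pPartitionSeries Covers (shiftedCells lam) (label M) := by
  ext m
  have (M : (offDiagonalCells lam).powerset) :
      Finite (pPartitions Covers (shiftedCells lam) (label M.1) m) :=
    finite_pPartitions not_covers_self hlam (label_injective M.1) m
  have hcard := (Nat.card_congr (ShiftedSSYT.equivMarked lam m)).trans Nat.card_sigma
  rw [Finset.sum_coe_sort _ fun M => Nat.card (pPartitions Covers (shiftedCells lam) (label M) m)]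
    at hcard
  rw [map_sum]
  exact (congrArg Nat.cast hcard).trans (Nat.cast_sum _ _)

/-- The ascent patterns of the marked shifted tableaux of shape `lam`, over all choices of the
primed cells. -/
def markedAscentPatterns (lam : List ℕ) : Multiset (List Bool) :=
  (offDiagonalCells lam).powerset.val.bind fun M =>
    ascentPatterns Covers (shiftedCells lam) (label M)

theorem skewSchur_eq_sum_fundamentalQSym {lam mu : List ℕ} (h : (skewCells lam mu).Nonempty) :
    skewSchur lam mu =
      ((ascentPatterns Covers (skewCells lam mu) (label ∅)).map fundamentalQSym).sum := by
  rw [skewSchur_eq_pPartitionSeries,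
    pPartitionSeries_eq_sum_fundamentalQSym not_covers_self h (label_injective ∅)]

theorem schurP_eq_sum_fundamentalQSym {lam : List ℕ} (h : (shiftedCells lam).Nonempty) :
    schurP lam = ((markedAscentPatterns lam).map fundamentalQSym).sum := by
  simp only [schurP_eq_sum_pPartitionSeries h, markedAscentPatterns, Multiset.map_bind,
    Multiset.sum_bind,
    pPartitionSeries_eq_sum_fundamentalQSym not_covers_self h (label_injective _)]
  rfl

set_option maxRecDepth 100000 in
theorem ascentPatterns_staircase_4321_21 :
    ascentPatterns Covers (skewCells [4, 3, 2, 1] [2, 1]) (label ∅) =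
      markedAscentPatterns [4, 3] + markedAscentPatterns [4, 2, 1] := by
  have h4321 : ([(0, 3), (0, 2), (1, 2), (1, 1), (2, 1), (2, 0), (3, 0)] : List (ℕ × ℕ)) =
      (skewCells [4, 3, 2, 1] [2, 1]).val := by decide +kernel
  have h43 : ([(0, 0), (0, 1), (1, 1), (0, 2), (1, 2), (0, 3), (1, 3)] : List (ℕ × ℕ)) =
      (shiftedCells [4, 3]).val := by decide +kernel
  have h421 : ([(0, 0), (0, 1), (1, 1), (0, 2), (1, 2), (2, 2), (0, 3)] : List (ℕ × ℕ)) =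
      (shiftedCells [4, 2, 1]).val := by decide +kernel
  simp only [markedAscentPatterns, ascentPatterns, linearExtensions_val h4321,
    linearExtensions_val h43, linearExtensions_val h421]
  decide +kernel

end Tableaux

theorem skewSchur_staircase_4321_21 :
    skewSchur [4, 3, 2, 1] [2, 1] = schurP [4, 3] + schurP [4, 2, 1] := by
  rw [skewSchur_eq_sum_fundamentalQSym (by decide), schurP_eq_sum_fundamentalQSym (by decide),
    schurP_eq_sum_fundamentalQSym (by decide), ascentPatterns_staircase_4321_21, Multiset.map_add,
    Multiset.sum_add]

end
end

section
/- The skew Schur function s_{(5,4,3,2,1)/(3,2)} equals P_{(5,4,1)} + P_{(5,3,2)}. -/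
/-!
STATEMENT 12: s_{(5,4,3,2,1)/(3,2)} = P_{(5,4,1)} + P_{(5,3,2)}.
-/

noncomputable section

/-!
The coefficient of `x^m` on either side counts tableaux of content `m`.  Removing the occurrences of
the largest letter `k` from a tableau removes a horizontal strip (the `k`'s) and then, for shifted
tableaux, a vertical strip off the diagonal (the `k'`'s), which gives a branching rule for these
numbers.  By this rule the coefficient depends only on the composition formed by the nonzero entries
of `m`, and both sides are homogeneous of degree 10, so the identity comes down to the finitely many
compositions of 10.  These are compared by one computation that branches over the size of what
remains after each letter, on formal sums of shapes with equal shapes merged.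
-/

variable {P : ℕ × ℕ → Bool} {p : Bool} {L K : List (ℕ × ℕ)} {E F : ℕ × ℕ → ℕ} {t N : ℕ}
  {M : ℕ → ℕ}

/-- The neighbour of `c` in which a letter placed in `c` may not be repeated: the one to the right
if the letter is primed, the one below if it is unprimed.  Hence `strictNbr (!p) c` is the
neighbour in which a letter of kind `p` may be repeated. -/
def strictNbr (p : Bool) (c : ℕ × ℕ) : ℕ × ℕ :=
  bif p then (c.1, c.2 + 1) else (c.1 + 1, c.2)

/-- Marked tableaux on the cells `L`, in the encoding of `ShiftedSSYT`: odd entries are primed.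
Only the cells with `P c` may carry a primed letter, so that both semistandard tableaux (no such
cells) and shifted tableaux (all cells off the diagonal) are instances. -/
structure IsMarkedTableau (P : ℕ × ℕ → Bool) (L : List (ℕ × ℕ)) (E : ℕ × ℕ → ℕ) : Prop where
  outside : ∀ c ∉ L, E c = 0
  pos : ∀ c ∈ L, 0 < E c
  weak : ∀ p, ∀ c ∈ L, strictNbr p c ∈ L → E c ≤ E (strictNbr p c)
  strict : ∀ c ∈ L, E (strictNbr (E c).bodd c) ≠ E c
  primable : ∀ c ∈ L, (E c).bodd → P c

/-- The marked tableaux with letters at most `t` whose content has partial sums `M`: exactly `M k`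
of the cells carry a letter up to `k`, for every letter `k` of the alphabet. -/
def markedTableaux (P : ℕ × ℕ → Bool) (L : List (ℕ × ℕ)) (t : ℕ) (M : ℕ → ℕ) :
    Set (ℕ × ℕ → ℕ) :=
  {E | IsMarkedTableau P L E ∧ (∀ c ∈ L, E c ≤ t) ∧
    ∀ k, 2 * k ≤ t → L.countP (E · ≤ 2 * k) = M k}

/-! ### The branching rule -/

/-- `K` arises from `L` by removing a strip that can be filled with one new largest letter, primed
or not according to `p`: a horizontal strip for an unprimed letter, a vertical strip inside `P`
for a primed one. -/
def IsStripRemoval (P : ℕ × ℕ → Bool) (p : Bool) (L K : List (ℕ × ℕ)) : Prop :=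
  K.Sublist L ∧ ∀ c ∈ L, c ∉ K → (p → P c) ∧ strictNbr p c ∉ L ∧ strictNbr (!p) c ∉ K

/-- All `K` with `IsStripRemoval P p L K`, for cells `L` listed in reading order, in which the
neighbours of a cell come after it. -/
def stripRemovals (P : ℕ × ℕ → Bool) (p : Bool) : List (ℕ × ℕ) → List (List (ℕ × ℕ))
  | [] => [[]]
  | c :: L => (stripRemovals P p L).map (c :: ·) ++
      if (p → P c) ∧ strictNbr p c ∉ L then
        (stripRemovals P p L).filter (strictNbr (!p) c ∉ ·)
      else []

/-- Cells listed row by row, and from left to right in each row. -/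
def IsReadingOrder (L : List (ℕ × ℕ)) : Prop :=
  L.Pairwise (Prod.Lex (· < ·) (· < ·))

theorem IsReadingOrder.nodup (hL : IsReadingOrder L) : L.Nodup :=
  hL.imp fun h e => by simp [e, Prod.lex_def] at h

theorem IsReadingOrder.sublist (hL : IsReadingOrder L) (h : K.Sublist L) : IsReadingOrder K :=
  List.Pairwise.sublist h hL

theorem IsReadingOrder.strictNbr_ne_head {c d : ℕ × ℕ} (hL : IsReadingOrder (c :: L))
    (hd : d ∈ c :: L) (q : Bool) : strictNbr q d ≠ c := by
  rintro rfl
  rcases List.mem_cons.1 hd with h | h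
  · cases q <;> simp [strictNbr, Prod.ext_iff] at h
  · have := List.rel_of_pairwise_cons hL h
    cases q <;> simp [strictNbr, Prod.lex_def] at this

theorem isStripRemoval_cons_cons {c : ℕ × ℕ} (hL : IsReadingOrder (c :: L)) :
    IsStripRemoval P p (c :: L) (c :: K) ↔ IsStripRemoval P p L K := by
  have hc : c ∉ L := (List.nodup_cons.1 hL.nodup).1
  have hn := fun q {d} hd => hL.strictNbr_ne_head (d := d) (List.mem_cons_of_mem c hd) q
  simp only [IsStripRemoval, List.cons_sublist_cons]
  refine and_congr_right fun _ => ?_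
  simp only [List.mem_cons, forall_eq_or_imp, not_true_eq_false, false_imp_iff, not_or, false_and,
    true_and]
  refine forall₂_congr fun d hd => ?_
  have : d ≠ c := fun h => hc (h ▸ hd)
  simp only [this, hn _ hd, not_false_eq_true, true_and]

theorem isStripRemoval_cons_of_notMem {c : ℕ × ℕ} (hL : IsReadingOrder (c :: L)) (hK : c ∉ K) :
    IsStripRemoval P p (c :: L) K ↔
      ((p → P c) ∧ strictNbr p c ∉ L) ∧ IsStripRemoval P p L K ∧ strictNbr (!p) c ∉ K := by
  have hn := fun {d} hd => hL.strictNbr_ne_head (d := d) hd p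
  have hsub : K.Sublist (c :: L) ↔ K.Sublist L :=
    ⟨fun h => (List.sublist_cons_iff.1 h).resolve_right fun ⟨_, h, _⟩ => hK (h ▸ .head _),
      (·.cons c)⟩
  have hmem : ∀ d ∈ c :: L, (strictNbr p d ∉ c :: L ↔ strictNbr p d ∉ L) := fun d hd => by
    simp [hn hd]
  rw [IsStripRemoval, IsStripRemoval, hsub]
  constructor
  · rintro ⟨hs, h⟩
    obtain ⟨hP, hstrict, hweak⟩ := h c List.mem_cons_self hK
    exact ⟨⟨hP, (hmem c List.mem_cons_self).1 hstrict⟩, ⟨hs, fun d hd hdK =>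
      (h d (.tail c hd) hdK).imp_right (.imp_left (hmem d (.tail c hd)).1)⟩, hweak⟩
  · rintro ⟨⟨hP, hstrict⟩, ⟨hs, h⟩, hweak⟩
    refine ⟨hs, fun d hd hdK => ?_⟩
    rw [hmem d hd]
    rcases List.mem_cons.1 hd with rfl | hd
    exacts [⟨hP, hstrict, hweak⟩, h d hd hdK]

theorem mem_stripRemovals (hL : IsReadingOrder L) :
    K ∈ stripRemovals P p L ↔ IsStripRemoval P p L K := by
  induction L generalizing K with
  | nil => simp [stripRemovals, IsStripRemoval]
  | cons c L ih =>
    have hc : c ∉ L := (List.nodup_cons.1 hL.nodup).1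
    have hsub : ∀ J, IsStripRemoval P p L J → c ∉ J := fun J hJ h => hc (hJ.1.subset h)
    simp only [stripRemovals, List.mem_append, List.mem_map, ih hL.of_cons, apply_ite (K ∈ ·),
      List.mem_filter, decide_eq_true_eq, List.not_mem_nil]
    constructor
    · rintro (⟨J, hJ, rfl⟩ | h)
      · exact (isStripRemoval_cons_cons hL).2 hJ
      · split_ifs at h with hcond
        exact (isStripRemoval_cons_of_notMem hL (hsub K h.1)).2 ⟨hcond, h⟩
    · intro h
      by_cases hK : c ∈ K
      · obtain hK' | ⟨J, rfl, -⟩ := List.sublist_cons_iff.1 h.1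
        · exact absurd (hK'.subset hK) hc
        · exact .inl ⟨J, (isStripRemoval_cons_cons hL).1 h, rfl⟩
      · have := (isStripRemoval_cons_of_notMem hL hK).1 h
        exact .inr (by rw [if_pos this.1]; exact this.2)

theorem nodup_stripRemovals (hL : IsReadingOrder L) : (stripRemovals P p L).Nodup := by
  induction L with
  | nil => simp [stripRemovals]
  | cons c L ih =>
    have hc : c ∉ L := (List.nodup_cons.1 hL.nodup).1
    have ih' := ih hL.of_cons
    rw [stripRemovals]
    refine List.Nodup.append (ih'.map List.cons_injective) ?_ ?_
    · split_ifs
      exacts [ih'.filter _, List.nodup_nil]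
    · intro K hK hK'
      obtain ⟨J, -, rfl⟩ := List.mem_map.1 hK
      split_ifs at hK'
      · have := ((mem_stripRemovals hL.of_cons).1 (List.mem_filter.1 hK').1).1
        exact hc (this.subset List.mem_cons_self)
      · simp at hK'

theorem markedTableaux_finite : (markedTableaux P L t M).Finite := by
  have hinj : Function.Injective
      fun (E : markedTableaux P L t M) (c : {c // c ∈ L}) =>
        (⟨E.1 c, Nat.lt_succ_of_le (E.2.2.1 c c.2)⟩ : Fin (t + 1)) := by
    intro E F h
    ext c
    by_cases hc : c ∈ L
    · exact congrArg Fin.val (congrFun h ⟨c, hc⟩)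
    · rw [E.2.1.outside c hc, F.2.1.outside c hc]
  exact Finite.of_injective _ hinj

theorem isStripRemoval_filter_le (hE : E ∈ markedTableaux P L (t + 1) M) :
    IsStripRemoval P (t + 1).bodd L (L.filter (E · ≤ t)) := by
  obtain ⟨hT, hle, -⟩ := hE
  refine ⟨List.filter_sublist, fun c hc hcK => ?_⟩
  have hEc : E c = t + 1 := by
    have := hle c hc
    simp only [List.mem_filter, hc, decide_eq_true_eq, true_and] at hcK
    omega
  rw [← hEc]
  refine ⟨hT.primable c hc, fun hn => ?_, fun hn => ?_⟩
  · have := hT.weak _ c hc hn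
    have := hle _ hn
    exact hT.strict c hc (by omega)
  · simp only [List.mem_filter, decide_eq_true_eq] at hn
    have := hT.weak _ c hc hn.1
    omega

theorem countP_le_of_filter_le {k : ℕ} (hk : 2 * k ≤ t) :
    (L.filter (E · ≤ t)).countP (E · ≤ 2 * k) = L.countP (E · ≤ 2 * k) := by
  rw [List.countP_filter]
  refine List.countP_congr fun c _ => ?_
  simp only [Bool.and_eq_true, decide_eq_true_eq]
  omega

/-- The restriction of a filling to the cells `K`. -/
def restrictTo (K : List (ℕ × ℕ)) (E : ℕ × ℕ → ℕ) (c : ℕ × ℕ) : ℕ :=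
  if c ∈ K then E c else 0

/-- The filling of `L` that agrees with `E` on `K` and carries `t` on the other cells. -/
def extendBy (t : ℕ) (L K : List (ℕ × ℕ)) (E : ℕ × ℕ → ℕ) (c : ℕ × ℕ) : ℕ :=
  if c ∈ L ∧ c ∉ K then t else E c

theorem restrictTo_mem (hE : E ∈ markedTableaux P L (t + 1) M) :
    restrictTo (L.filter (E · ≤ t)) E ∈ markedTableaux P (L.filter (E · ≤ t)) t M := by
  obtain ⟨hT, -, hM⟩ := hE
  set K := L.filter (E · ≤ t) with hK
  have hmem : ∀ c, c ∈ K ↔ c ∈ L ∧ E c ≤ t := fun c => by simp [hK]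
  have heq : ∀ c ∈ K, restrictTo K E c = E c := fun c hc => if_pos hc
  refine ⟨⟨fun c hc => if_neg hc, ?_, ?_, ?_, ?_⟩, ?_, ?_⟩
  · intro c hc
    rw [heq c hc]
    exact hT.pos c ((hmem c).1 hc).1
  · intro p c hc hn
    rw [heq c hc, heq _ hn]
    exact hT.weak p c ((hmem c).1 hc).1 ((hmem _).1 hn).1
  · intro c hc
    rw [heq c hc, restrictTo]
    have := hT.pos c ((hmem c).1 hc).1
    split_ifs
    exacts [hT.strict c ((hmem c).1 hc).1, by omega]
  · intro c hc
    rw [heq c hc]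
    exact hT.primable c ((hmem c).1 hc).1
  · intro c hc
    rw [heq c hc]
    exact ((hmem c).1 hc).2
  · intro k hk
    rw [← hM k (by omega), ← countP_le_of_filter_le (E := E) hk]
    exact List.countP_congr fun c hc => by simp only [heq c hc]

theorem filter_extendBy (hL : L.Nodup) (hK : K.Sublist L) (hE : ∀ c ∈ K, E c ≤ t) :
    L.filter (extendBy (t + 1) L K E · ≤ t) = K := by
  refine (hL.perm_iff_eq_of_sublist List.filter_sublist hK).1
    ((List.perm_ext_iff_of_nodup (hL.filter _) (hL.sublist hK)).2 fun c => ?_)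
  rw [List.mem_filter, decide_eq_true_eq, extendBy]
  split_ifs with h
  · simp [h.2]
  · exact ⟨fun hc => by_contra fun hcK => h ⟨hc.1, hcK⟩, fun hc => ⟨hK.subset hc, hE c hc⟩⟩

theorem isMarkedTableau_extendBy (hK : IsStripRemoval P (t + 1).bodd L K)
    (hE : E ∈ markedTableaux P K t M) : IsMarkedTableau P L (extendBy (t + 1) L K E) := by
  obtain ⟨hT, hle, -⟩ := hE
  have hold : ∀ c ∈ K, extendBy (t + 1) L K E c = E c := fun c hc => if_neg fun h => h.2 hc
  have hnew : ∀ c ∈ L, c ∉ K → extendBy (t + 1) L K E c = t + 1 := fun c hc h => if_pos ⟨hc, h⟩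
  have hout : ∀ c ∉ L, extendBy (t + 1) L K E c = 0 := fun c hc =>
    (if_neg fun h => hc h.1).trans (hT.outside c fun h => hc (hK.1.subset h))
  refine ⟨hout, fun c hc => ?_, fun p c hc hn => ?_, fun c hc => ?_, fun c hc => ?_⟩ <;>
    by_cases h : c ∈ K
  · exact (hold c h).symm ▸ hT.pos c h
  · exact (hnew c hc h).symm ▸ t.succ_pos
  · rw [hold c h]
    by_cases hn' : strictNbr p c ∈ K
    · exact (hold _ hn').symm ▸ hT.weak p c h hn'
    · exact (hnew _ hn hn').symm ▸ (hle c h).trans t.le_succ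
  · have hn' : strictNbr p c ∉ K := by
      obtain ⟨-, hstrict, hweak⟩ := hK.2 c hc h
      rcases Bool.eq_or_eq_not p (t + 1).bodd with rfl | rfl
      exacts [absurd hn hstrict, hweak]
    rw [hnew c hc h, hnew _ hn hn']
  · rw [hold c h, extendBy]
    have := hle c h
    split_ifs
    exacts [by omega, hT.strict c h]
  · rw [hnew c hc h, hout _ (hK.2 c hc h).2.1]
    exact t.succ_ne_zero.symm
  · exact (hold c h).symm ▸ hT.primable c h
  · exact (hnew c hc h).symm ▸ (hK.2 c hc h).1

theorem extendBy_mem (hL : L.Nodup) (hK : IsStripRemoval P (t + 1).bodd L K)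
    (hM : ∀ k, 2 * k = t + 1 → L.length = M k) (hE : E ∈ markedTableaux P K t M) :
    extendBy (t + 1) L K E ∈ markedTableaux P L (t + 1) M := by
  have hle : ∀ c ∈ L, extendBy (t + 1) L K E c ≤ t + 1 := fun c hc => by
    rw [extendBy]
    split_ifs with h
    exacts [le_rfl, (hE.2.1 c (by_contra fun hcK => h ⟨hc, hcK⟩)).trans t.le_succ]
  refine ⟨isMarkedTableau_extendBy hK hE, hle, fun k hk => ?_⟩
  rcases hk.eq_or_lt with hk | hk
  · rw [← hM k hk, List.countP_eq_length]
    exact fun c hc => by simpa [hk] using hle c hc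
  · rw [← countP_le_of_filter_le (Nat.le_of_lt_succ hk), filter_extendBy hL hK.1 hE.2.1,
      ← hE.2.2 k (Nat.le_of_lt_succ hk)]
    exact List.countP_congr fun c hc => by simp only [extendBy, hc, not_true, and_false, if_false]

theorem ncard_markedTableaux_filter_eq (hL : L.Nodup) (hK : IsStripRemoval P (t + 1).bodd L K)
    (hM : ∀ k, 2 * k = t + 1 → L.length = M k) :
    {E ∈ markedTableaux P L (t + 1) M | L.filter (E · ≤ t) = K}.ncard =
      (markedTableaux P K t M).ncard := by
  refine Set.ncard_congr (fun E _ => restrictTo K E) ?_ ?_ ?_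
  · rintro E ⟨hE, rfl⟩
    exact restrictTo_mem hE
  · rintro E F ⟨hE, rfl⟩ ⟨hF, hEF⟩ h
    ext c
    by_cases hc : c ∈ L
    · have hc' : E c ≤ t ↔ F c ≤ t := by
        have := congrArg (c ∈ ·) hEF
        simpa [hc, iff_comm] using this
      have := hE.2.1 c hc
      have := hF.2.1 c hc
      have := congrFun h c
      by_cases hEc : E c ≤ t
      · simpa [restrictTo, hc, hEc] using this
      · omega
    · rw [hE.1.outside c hc, hF.1.outside c hc]
  · refine fun E hE => ⟨extendBy (t + 1) L K E,
      ⟨extendBy_mem hL hK hM hE, filter_extendBy hL hK.1 hE.2.1⟩, funext fun c => ?_⟩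
    rw [restrictTo]
    split_ifs with hc
    exacts [if_neg fun h => h.2 hc, (hE.1.outside c hc).symm]

theorem ncard_markedTableaux_succ (hL : IsReadingOrder L)
    (hM : ∀ k, 2 * k = t + 1 → L.length = M k) :
    (markedTableaux P L (t + 1) M).ncard =
      ((stripRemovals P (t + 1).bodd L).map fun K => (markedTableaux P K t M).ncard).sum := by
  classical
  have hfin : (markedTableaux P L (t + 1) M).Finite := markedTableaux_finite
  have hmaps : ∀ E ∈ hfin.toFinset,
      L.filter (E · ≤ t) ∈ (stripRemovals P (t + 1).bodd L).toFinset := fun E hE =>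
    List.mem_toFinset.2 ((mem_stripRemovals hL).2
      (isStripRemoval_filter_le (hfin.mem_toFinset.1 hE)))
  rw [Set.ncard_eq_toFinset_card _ hfin, Finset.card_eq_sum_card_fiberwise hmaps,
    ← List.sum_toFinset _ (nodup_stripRemovals hL)]
  refine Finset.sum_congr rfl fun K hK => ?_
  rw [← ncard_markedTableaux_filter_eq hL.nodup
    ((mem_stripRemovals hL).1 (List.mem_toFinset.1 hK)) hM, ← Set.ncard_coe_finset]
  simp

/-- The shapes left after removing all occurrences, unprimed and primed, of the largest letter of
a marked tableau on `L`, listed with multiplicity. -/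
def letterRemovals (P : ℕ × ℕ → Bool) (L : List (ℕ × ℕ)) : List (List (ℕ × ℕ)) :=
  (stripRemovals P false L).flatMap (stripRemovals P true)

theorem isReadingOrder_of_mem_letterRemovals (hL : IsReadingOrder L)
    (hK : K ∈ letterRemovals P L) : IsReadingOrder K := by
  obtain ⟨J, hJ, hK⟩ := List.mem_flatMap.1 hK
  have hJL := hL.sublist ((mem_stripRemovals hL).1 hJ).1
  exact hJL.sublist ((mem_stripRemovals hJL).1 hK).1

theorem ncard_markedTableaux_letter (hL : IsReadingOrder L) (hM : L.length = M (N + 1)) :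
    (markedTableaux P L (2 * (N + 1)) M).ncard =
      ((letterRemovals P L).map fun K => (markedTableaux P K (2 * N) M).ncard).sum := by
  have hodd : (2 * N + 1).bodd = true := by simp
  have heven : (2 * N + 1 + 1).bodd = false := by simp
  rw [letterRemovals, List.map_flatMap, List.flatMap_def, List.sum_flatten, List.map_map,
    mul_add_one, ncard_markedTableaux_succ hL (fun k hk => by rw [hM, show k = N + 1 by omega]),
    heven]
  refine congrArg List.sum (List.map_congr_left fun J hJ => ?_)
  rw [ncard_markedTableaux_succ (hL.sublist ((mem_stripRemovals hL).1 hJ).1)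
    (fun k hk => by omega), hodd, Function.comp_apply]

theorem length_eq_of_mem_markedTableaux (hE : E ∈ markedTableaux P L (2 * N) M) :
    L.length = M N := by
  rw [← hE.2.2 N le_rfl, eq_comm, List.countP_eq_length]
  exact fun c hc => decide_eq_true (hE.2.1 c hc)

theorem eq_zero_of_mem_markedTableaux (hE : E ∈ markedTableaux P L t M) : M 0 = 0 := by
  rw [← hE.2.2 0 (by simp), List.countP_eq_zero]
  intro c hc
  have := hE.1.pos c hc
  simp only [decide_eq_true_eq]
  omega

theorem ncard_markedTableaux_nil (h0 : ∀ k ≤ N, M k = 0) :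
    (markedTableaux P [] (2 * N) M).ncard = 1 := by
  refine Set.ncard_eq_one.2 ⟨0, Set.eq_singleton_iff_unique_mem.2 ⟨⟨⟨?_, ?_, ?_, ?_, ?_⟩, ?_,
    fun k hk => (h0 k (by omega)).symm⟩,
    fun E hE => funext fun c => hE.1.outside c List.not_mem_nil⟩⟩
  all_goals simp

theorem markedTableaux_two_mul_succ_of_eq (h : M N = M (N + 1)) :
    markedTableaux P L (2 * (N + 1)) M = markedTableaux P L (2 * N) M := by
  ext E
  constructor
  · intro hE
    refine ⟨hE.1, ?_, fun k hk => hE.2.2 k (by omega)⟩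
    have := (hE.2.2 N (by omega)).trans (h.trans (length_eq_of_mem_markedTableaux hE).symm)
    simpa using List.countP_eq_length.1 this
  · intro hE
    refine ⟨hE.1, fun c hc => (hE.2.1 c hc).trans (by omega), fun k hk => ?_⟩
    rcases hk.eq_or_lt with hk | hk
    · obtain rfl : k = N + 1 := by omega
      rw [← h, ← length_eq_of_mem_markedTableaux hE, List.countP_eq_length]
      exact fun c hc => decide_eq_true ((hE.2.1 c hc).trans (by omega))
    · exact hE.2.2 k (by omega)

/-! ### Formal sums of shapes -/

section FormalSums

variable {α : Type*} [DecidableEq α]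

/-- Adds `n` copies of `a` to a formal sum, given as a list of elements with multiplicities. -/
def addTerm (a : α) (n : ℕ) : List (α × ℕ) → List (α × ℕ)
  | [] => [(a, n)]
  | (b, k) :: A => if a = b then (b, k + n) :: A else (b, k) :: addTerm a n A

/-- Merges the terms of a formal sum that have the same element. -/
def collectTerms (A : List (α × ℕ)) : List (α × ℕ) :=
  A.foldr (fun q => addTerm q.1 q.2) []

theorem sum_addTerm (f : α → ℕ) (a : α) (n : ℕ) (A : List (α × ℕ)) :
    ((addTerm a n A).map fun q => q.2 * f q.1).sum =
      n * f a + (A.map fun q => q.2 * f q.1).sum := by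
  induction A with
  | nil => simp [addTerm]
  | cons q A ih =>
    rw [addTerm]
    split_ifs with h
    · simp only [h, List.map_cons, List.sum_cons]
      ring
    · simp only [ih, List.map_cons, List.sum_cons]
      ring

theorem sum_collectTerms (f : α → ℕ) (A : List (α × ℕ)) :
    ((collectTerms A).map fun q => q.2 * f q.1).sum = (A.map fun q => q.2 * f q.1).sum := by
  induction A with
  | nil => rfl
  | cons q A ih =>
    rw [List.map_cons, List.sum_cons, ← ih, ← sum_addTerm]
    rfl

theorem forall_mem_addTerm {S : α → Prop} {a : α} {n : ℕ} {A : List (α × ℕ)} (ha : S a)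
    (hA : ∀ q ∈ A, S q.1) : ∀ q ∈ addTerm a n A, S q.1 := by
  induction A with
  | nil => simpa [addTerm] using ha
  | cons q A ih =>
    rw [List.forall_mem_cons] at hA
    rw [addTerm]
    split_ifs
    exacts [List.forall_mem_cons.2 hA, List.forall_mem_cons.2 ⟨hA.1, ih hA.2⟩]

theorem forall_mem_collectTerms {S : α → Prop} {A : List (α × ℕ)} (hA : ∀ q ∈ A, S q.1) :
    ∀ q ∈ collectTerms A, S q.1 := by
  induction A with
  | nil => exact hA
  | cons q A ih =>
    rw [List.forall_mem_cons] at hA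
    exact forall_mem_addTerm hA.1 (ih hA.2)

end FormalSums

/-- Formal sums of shapes, as lists of shapes with multiplicities. -/
abbrev ShapeSum : Type :=
  List (List (ℕ × ℕ) × ℕ)

/-- The terms of size `n` of a formal sum of shapes, collected. -/
def level (n : ℕ) (A : ShapeSum) : ShapeSum :=
  collectTerms (A.filter (·.1.length = n))

/-- The linear extension of `letterRemovals` to formal sums of shapes. -/
def removeLetter (P : ℕ × ℕ → Bool) (A : ShapeSum) : ShapeSum :=
  A.flatMap fun q => (letterRemovals P q.1).map (·, q.2)

/-- Compares two formal sums of shapes, with primes allowed in `P` and `Q` respectively, in the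
numbers of their marked tableaux of each content of total at most `d`, by branching over the
sizes of the shapes that remain after successively removing the largest letter. -/
def countsAgree (P Q : ℕ × ℕ → Bool) : ℕ → ShapeSum → ShapeSum → Bool
  | 0, A, B => ((level 0 A).map Prod.snd).sum == ((level 0 B).map Prod.snd).sum
  | d + 1, A, B => countsAgree P Q d A B &&
      countsAgree P Q d (removeLetter P (level (d + 1) A)) (removeLetter Q (level (d + 1) B))

/-- The number of marked tableaux on a formal sum of shapes. -/
def weightedCount (P : ℕ × ℕ → Bool) (N : ℕ) (M : ℕ → ℕ) (A : ShapeSum) : ℕ :=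
  (A.map fun q => q.2 * (markedTableaux P q.1 (2 * N) M).ncard).sum

section WeightedCount

variable {Q : ℕ × ℕ → Bool} {A B : ShapeSum} {d n : ℕ}

theorem isReadingOrder_of_mem_level (hA : ∀ q ∈ A, IsReadingOrder q.1) :
    ∀ q ∈ level n A, IsReadingOrder q.1 :=
  forall_mem_collectTerms fun q hq => hA q (List.mem_of_mem_filter hq)

theorem length_eq_of_mem_level : ∀ q ∈ level n A, q.1.length = n :=
  forall_mem_collectTerms (S := fun L : List _ => L.length = n) fun _ hq => by
    simpa using (List.mem_filter.1 hq).2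

theorem isReadingOrder_of_mem_removeLetter (hA : ∀ q ∈ A, IsReadingOrder q.1) :
    ∀ q ∈ removeLetter P A, IsReadingOrder q.1 := by
  intro q hq
  obtain ⟨r, hr, hq⟩ := List.mem_flatMap.1 hq
  obtain ⟨K, hK, rfl⟩ := List.mem_map.1 hq
  exact isReadingOrder_of_mem_letterRemovals (hA r hr) hK

theorem weightedCount_level (A : ShapeSum) :
    weightedCount P N M (level (M N) A) = weightedCount P N M A := by
  rw [weightedCount, weightedCount, level,
    sum_collectTerms fun L => (markedTableaux P L (2 * N) M).ncard]
  induction A with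
  | nil => rfl
  | cons q A ih =>
    by_cases h : q.1.length = M N
    · simp only [List.filter_cons, h, decide_true, if_true, List.map_cons, List.sum_cons, ih]
    · have hempty : markedTableaux P q.1 (2 * N) M = ∅ :=
        Set.eq_empty_of_forall_notMem fun _ hE => h (length_eq_of_mem_markedTableaux hE)
      simp [h, ih, hempty]

theorem weightedCount_of_eq_zero (h0 : ∀ k ≤ N, M k = 0) (A : ShapeSum) :
    weightedCount P N M A = ((level 0 A).map Prod.snd).sum := by
  rw [← weightedCount_level, h0 N le_rfl]
  refine congrArg List.sum (List.map_congr_left fun q hq => ?_)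
  rw [List.length_eq_zero_iff.1 (length_eq_of_mem_level q hq), ncard_markedTableaux_nil h0, mul_one]

theorem weightedCount_removeLetter (hA : ∀ q ∈ A, IsReadingOrder q.1) :
    weightedCount P N M (removeLetter P (level (M (N + 1)) A)) = weightedCount P (N + 1) M A := by
  rw [← weightedCount_level (N := N + 1), weightedCount, weightedCount, removeLetter,
    List.map_flatMap, List.flatMap_def, List.sum_flatten, List.map_map]
  refine congrArg List.sum (List.map_congr_left fun q hq => ?_)
  rw [ncard_markedTableaux_letter (isReadingOrder_of_mem_level hA q hq)
    (length_eq_of_mem_level q hq), ← List.sum_map_mul_left, Function.comp_apply, List.map_map]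
  rfl

theorem weightedCount_eq_of_countsAgree (hM : Monotone M) (h0 : M 0 = 0)
    (hA : ∀ q ∈ A, IsReadingOrder q.1) (hB : ∀ q ∈ B, IsReadingOrder q.1)
    (hAB : countsAgree P Q d A B) (hd : M N ≤ d) :
    weightedCount P N M A = weightedCount Q N M B := by
  induction d generalizing A B N with
  | zero =>
    have hzero : ∀ k ≤ N, M k = 0 := fun k hk => Nat.le_zero.1 ((hM hk).trans hd)
    rw [weightedCount_of_eq_zero hzero, weightedCount_of_eq_zero hzero]
    exact beq_iff_eq.1 hAB
  | succ d ih =>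
    obtain ⟨hlow, htop⟩ := Bool.and_eq_true_iff.1 hAB
    induction N with
    | zero => exact ih hA hB hlow (h0.trans_le d.zero_le)
    | succ N ihN =>
      rcases (hM (Nat.le_add_right N 1)).eq_or_lt with h | h
      · have := ihN (h.trans_le hd)
        simpa only [weightedCount, markedTableaux_two_mul_succ_of_eq h] using this
      rcases hd.lt_or_eq with hd | hd
      · exact ih hA hB hlow (Nat.le_of_lt_succ hd)
      · rw [← weightedCount_removeLetter hA, ← weightedCount_removeLetter hB, hd]
        exact ih (isReadingOrder_of_mem_removeLetter (isReadingOrder_of_mem_level hA))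
          (isReadingOrder_of_mem_removeLetter (isReadingOrder_of_mem_level hB)) htop (by omega)

theorem weightedCount_eq_zero (hA : ∀ q ∈ A, q.1.length ≤ d)
    (h : ¬ (M 0 = 0 ∧ M N ≤ d)) : weightedCount P N M A = 0 := by
  refine List.sum_eq_zero fun x hx => ?_
  obtain ⟨q, hq, rfl⟩ := List.mem_map.1 hx
  have hempty : markedTableaux P q.1 (2 * N) M = ∅ :=
    Set.eq_empty_of_forall_notMem fun _ hE => h ⟨eq_zero_of_mem_markedTableaux hE,
      length_eq_of_mem_markedTableaux hE ▸ hA q hq⟩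
  rw [hempty, Set.ncard_empty, mul_zero]

end WeightedCount

/-! ### Coefficients -/

section Coefficients

variable {m : ℕ → ℕ} {lam mu : List ℕ}

/-- The partial sums of a content `m`, the form in which `markedTableaux` prescribes contents. -/
def partialSums (m : ℕ → ℕ) (k : ℕ) : ℕ :=
  ∑ j ∈ Finset.range (k + 1), m j

theorem partialSums_succ (m : ℕ → ℕ) (k : ℕ) :
    partialSums m (k + 1) = partialSums m k + m (k + 1) :=
  Finset.sum_range_succ _ _

theorem monotone_partialSums : Monotone (partialSums m) := fun _ _ h =>
  Finset.sum_le_sum_of_subset (Finset.range_mono (Nat.succ_le_succ h))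

theorem countP_le_eq_partialSums (hL : L.Nodup) (f : ℕ × ℕ → ℕ) (k : ℕ) :
    L.countP (f · ≤ k) = partialSums (fun j => (L.toFinset.filter (f · = j)).card) k := by
  have hmaps : ∀ c ∈ L.toFinset.filter (f · ≤ k), f c ∈ Finset.range (k + 1) := fun c hc =>
    Finset.mem_range_succ_iff.2 (Finset.mem_filter.1 hc).2
  have hcount : L.countP (f · ≤ k) = (L.toFinset.filter (f · ≤ k)).card := by
    rw [List.countP_eq_length_filter, ← List.toFinset_card_of_nodup (hL.filter _),
      List.toFinset_filter]
    simp
  rw [hcount, Finset.card_eq_sum_card_fiberwise hmaps]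
  refine Finset.sum_congr rfl fun j hj => ?_
  rw [Finset.filter_filter]
  refine congrArg _ (Finset.filter_congr fun c _ => ?_)
  have := Finset.mem_range_succ_iff.1 hj
  omega

theorem card_filter_eq_iff (hL : L.Nodup) (hm : ∀ k, N < k → m k = 0) (f : ℕ × ℕ → ℕ) :
    (∀ k, (L.toFinset.filter (f · = k)).card = m k) ↔
      (∀ c ∈ L, f c ≤ N) ∧ ∀ k ≤ N, L.countP (f · ≤ k) = partialSums m k := by
  simp only [countP_le_eq_partialSums hL]
  constructor
  · intro h
    refine ⟨fun c hc => not_lt.1 fun hlt => ?_, fun k _ => by simp only [h]⟩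
    have := Finset.card_eq_zero.1 ((h (f c)).trans (hm _ hlt))
    exact Finset.filter_eq_empty_iff.1 this (List.mem_toFinset.2 hc) rfl
  · rintro ⟨hle, h⟩ k
    rcases lt_or_ge N k with hk | hk
    · rw [hm k hk, Finset.card_eq_zero, Finset.filter_eq_empty_iff]
      exact fun c hc => ((hle c (List.mem_toFinset.1 hc)).trans_lt hk).ne
    · cases k with
      | zero => simpa [partialSums] using h 0 hk
      | succ k =>
        have hpred := h k (by omega)
        have hsucc := h (k + 1) hk
        rw [partialSums_succ, partialSums_succ, hpred] at hsucc
        exact Nat.add_left_cancel hsucc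

theorem natCard_content_eq_ncard {α : Type*} (e : α ≃ {E // IsMarkedTableau P L E})
    (hL : L.Nodup) (hm : ∀ k, N < k → m k = 0) :
    Nat.card {T // ∀ k, (L.toFinset.filter fun c => ((e T).1 c + 1) / 2 = k).card = m k} =
      (markedTableaux P L (2 * N) (partialSums m)).ncard := by
  rw [← Nat.card_coe_set_eq]
  refine Nat.card_congr ((e.subtypeEquiv (q := fun E => (∀ c ∈ L, E.1 c ≤ 2 * N) ∧
    ∀ k, 2 * k ≤ 2 * N → L.countP (E.1 · ≤ 2 * k) = partialSums m k) fun T => ?_).trans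
      (Equiv.subtypeSubtypeEquivSubtypeInter (IsMarkedTableau P L) fun E =>
        (∀ c ∈ L, E c ≤ 2 * N) ∧ ∀ k, 2 * k ≤ 2 * N → L.countP (E · ≤ 2 * k) = partialSums m k))
  have hhalf : ∀ x k : ℕ, (x + 1) / 2 ≤ k ↔ x ≤ 2 * k := by omega
  simp only [card_filter_eq_iff hL hm, hhalf, Nat.mul_le_mul_left_iff two_pos]

theorem bodd_eq_true_iff_odd {n : ℕ} : n.bodd = true ↔ Odd n := by
  rw [Nat.odd_iff, Nat.mod_two_of_bodd]
  cases n.bodd <;> simp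

theorem IsMarkedTableau.even_of_eq_right (hE : IsMarkedTableau P L E) {i j : ℕ} (hc : (i, j) ∈ L)
    (h : E (i, j) = E (i, j + 1)) : Even (E (i, j)) := by
  have := hE.strict _ hc
  rw [← Nat.not_odd_iff_even, ← bodd_eq_true_iff_odd]
  intro hodd
  rw [hodd] at this
  exact this h.symm

theorem IsMarkedTableau.odd_of_eq_below (hE : IsMarkedTableau P L E) {i j : ℕ} (hc : (i, j) ∈ L)
    (h : E (i, j) = E (i + 1, j)) : Odd (E (i, j)) := by
  have := hE.strict _ hc
  rw [← bodd_eq_true_iff_odd]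
  by_contra heven
  rw [Bool.eq_false_of_not_eq_true heven] at this
  exact this h.symm

theorem IsMarkedTableau.even_of_not (hE : IsMarkedTableau P L E) {c : ℕ × ℕ} (hc : ¬ P c) :
    Even (E c) := by
  rw [← Nat.not_odd_iff_even, ← bodd_eq_true_iff_odd]
  by_cases h : c ∈ L
  · exact fun hodd => hc (hE.primable c h hodd)
  · simp [hE.outside c h]

/-- The cells of `lam/mu` in reading order. -/
def skewCellList (lam mu : List ℕ) : List (ℕ × ℕ) :=
  (List.range lam.length ×ˢ List.range (lam.foldr max 0)).filter
    fun c => mu.getD c.1 0 ≤ c.2 ∧ c.2 < lam.getD c.1 0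

/-- The cells of the shifted diagram of `lam` in reading order. -/
def shiftedCellList (lam : List ℕ) : List (ℕ × ℕ) :=
  (List.range lam.length ×ˢ List.range (lam.length + lam.foldr max 0)).filter
    fun c => c.1 ≤ c.2 ∧ c.2 < c.1 + lam.getD c.1 0

theorem isReadingOrder_range_product (a b : ℕ) :
    IsReadingOrder (List.range a ×ˢ List.range b) := by
  refine List.pairwise_flatMap.2 ⟨fun i _ => ?_, List.pairwise_lt_range.imp fun h x hx y hy => ?_⟩
  · exact List.pairwise_map.2 (List.pairwise_lt_range.imp fun h => .right i h)
  · obtain ⟨_, -, rfl⟩ := List.mem_map.1 hx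
    obtain ⟨_, -, rfl⟩ := List.mem_map.1 hy
    exact .left _ _ h

theorem isReadingOrder_skewCellList (lam mu : List ℕ) : IsReadingOrder (skewCellList lam mu) :=
  (isReadingOrder_range_product _ _).sublist List.filter_sublist

theorem isReadingOrder_shiftedCellList (lam : List ℕ) : IsReadingOrder (shiftedCellList lam) :=
  (isReadingOrder_range_product _ _).sublist List.filter_sublist

theorem mem_skewCells {c : ℕ × ℕ} : c ∈ skewCells lam mu ↔ c ∈ skewCellList lam mu := by
  obtain ⟨i, j⟩ := c
  simp [skewCells, skewCellList, and_assoc]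

theorem mem_shiftedCells {c : ℕ × ℕ} : c ∈ shiftedCells lam ↔ c ∈ shiftedCellList lam := by
  obtain ⟨i, j⟩ := c
  simp [shiftedCells, shiftedCellList, and_assoc]

theorem isMarkedTableau_two_mul (T : SkewSSYT lam mu) :
    IsMarkedTableau (fun _ => false) (skewCellList lam mu) (2 * T.entry ·) := by
  obtain ⟨entry, outside, pos, rowWeak, colStrict⟩ := T
  simp only [mem_skewCells] at outside pos rowWeak colStrict
  refine ⟨fun c hc => by simp [outside c hc], fun c hc => Nat.mul_pos two_pos (pos c hc), ?_, ?_,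
    by simp⟩
  · rintro (_ | _) ⟨i, j⟩ hc hn
    exacts [Nat.mul_le_mul_left 2 (colStrict i j hc hn).le,
      Nat.mul_le_mul_left 2 (rowWeak i j hc hn)]
  · rintro ⟨i, j⟩ hc
    rw [Nat.bodd_mul]
    change 2 * entry (i + 1, j) ≠ 2 * entry (i, j)
    by_cases hn : (i + 1, j) ∈ skewCellList lam mu
    · have := colStrict i j hc hn
      omega
    · have := outside _ hn
      have := pos _ hc
      omega

/-- Semistandard tableaux are the marked tableaux without primed letters. -/
def skewEquivMarked (lam mu : List ℕ) :
    SkewSSYT lam mu ≃ {E // IsMarkedTableau (fun _ => false) (skewCellList lam mu) E} where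
  toFun T := ⟨(2 * T.entry ·), isMarkedTableau_two_mul T⟩
  invFun E :=
    { entry := (E.1 · / 2)
      outside := fun c hc => by
        rw [mem_skewCells] at hc
        simp [E.2.outside c hc]
      pos := fun c hc => by
        rw [mem_skewCells] at hc
        have := E.2.pos c hc
        have := (E.2.even_of_not (c := c) (by simp)).two_dvd
        omega
      rowWeak := fun i j hc hn => by
        rw [mem_skewCells] at hc hn
        exact Nat.div_le_div_right (E.2.weak true _ hc hn)
      colStrict := fun i j hc hn => by
        rw [mem_skewCells] at hc hn
        have hle : E.1 (i, j) ≤ E.1 (i + 1, j) := E.2.weak false _ hc hn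
        have heven := fun c => E.2.even_of_not (c := c) (by simp)
        have hne : E.1 (i, j) ≠ E.1 (i + 1, j) := fun h =>
          Nat.not_odd_iff_even.2 (heven _) (E.2.odd_of_eq_below hc h)
        have := (heven (i, j)).two_dvd
        have := (heven (i + 1, j)).two_dvd
        omega }
  left_inv T := by simp
  right_inv E := Subtype.ext (funext fun c =>
    Nat.mul_div_cancel' (E.2.even_of_not (c := c) (by simp)).two_dvd)

theorem isMarkedTableau_entry (S : ShiftedSSYT lam) :
    IsMarkedTableau (fun c => c.1 != c.2) (shiftedCellList lam) S.entry := by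
  obtain ⟨entry, outside, pos, rowWeak, rowPrime, colWeak, colPrime, diag⟩ := S
  simp only [mem_shiftedCells] at outside pos rowWeak rowPrime colWeak colPrime diag
  refine ⟨outside, pos, ?_, ?_, ?_⟩
  · rintro (_ | _) ⟨i, j⟩ hc hn
    exacts [colWeak i j hc hn, rowWeak i j hc hn]
  · rintro ⟨i, j⟩ hc heq
    have hn : strictNbr (entry (i, j)).bodd (i, j) ∈ shiftedCellList lam := by
      by_contra hn
      exact (Nat.ne_of_gt (pos _ hc)) (heq.symm.trans (outside _ hn))
    cases hb : (entry (i, j)).bodd <;> rw [hb] at heq hn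
    · have := bodd_eq_true_iff_odd.2 (colPrime i j hc hn heq.symm)
      simp [hb] at this
    · exact Nat.not_odd_iff_even.2 (rowPrime i j hc hn heq.symm) (bodd_eq_true_iff_odd.1 hb)
  · rintro ⟨i, j⟩ hc hodd
    refine bne_iff_ne.2 fun h : i = j => ?_
    subst h
    exact Nat.not_odd_iff_even.2 (diag i hc) (bodd_eq_true_iff_odd.1 hodd)

/-- Shifted semistandard tableaux are the marked tableaux without primed letters on the diagonal. -/
def shiftedEquivMarked (lam : List ℕ) :
    ShiftedSSYT lam ≃ {E // IsMarkedTableau (fun c => c.1 != c.2) (shiftedCellList lam) E} where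
  toFun S := ⟨S.entry, isMarkedTableau_entry S⟩
  invFun E :=
    { entry := E.1
      outside := fun c hc => E.2.outside c (mem_shiftedCells.not.1 hc)
      pos := fun c hc => E.2.pos c (mem_shiftedCells.1 hc)
      rowWeak := fun i j hc hn => E.2.weak true _ (mem_shiftedCells.1 hc) (mem_shiftedCells.1 hn)
      rowPrime := fun i j hc _ => E.2.even_of_eq_right (mem_shiftedCells.1 hc)
      colWeak := fun i j hc hn => E.2.weak false _ (mem_shiftedCells.1 hc) (mem_shiftedCells.1 hn)
      colPrime := fun i j hc _ => E.2.odd_of_eq_below (mem_shiftedCells.1 hc)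
      diag := fun i _ => E.2.even_of_not (by simp) }
  left_inv _ := rfl
  right_inv _ := rfl

theorem coeff_skewSchur (lam mu : List ℕ) {m : ℕ →₀ ℕ} (hm : ∀ k, N < k → m k = 0) :
    MvPowerSeries.coeff m (skewSchur lam mu) =
      ((markedTableaux (fun _ => false) (skewCellList lam mu) (2 * N) (partialSums m)).ncard :
        ℚ) := by
  have hcells : skewCells lam mu = (skewCellList lam mu).toFinset := by ext; simp [mem_skewCells]
  have hhalf : ∀ x : ℕ, (2 * x + 1) / 2 = x := by omega
  rw [MvPowerSeries.coeff_apply, skewSchur, hcells,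
    ← natCard_content_eq_ncard (skewEquivMarked lam mu)
      (isReadingOrder_skewCellList lam mu).nodup hm]
  simp only [skewEquivMarked, Equiv.coe_fn_mk, hhalf]

theorem coeff_schurP (lam : List ℕ) {m : ℕ →₀ ℕ} (hm : ∀ k, N < k → m k = 0) :
    MvPowerSeries.coeff m (schurP lam) =
      ((markedTableaux (fun c => c.1 != c.2) (shiftedCellList lam) (2 * N) (partialSums m)).ncard :
        ℚ) := by
  have hcells : shiftedCells lam = (shiftedCellList lam).toFinset := by
    ext; simp [mem_shiftedCells]
  rw [MvPowerSeries.coeff_apply, schurP, hcells,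
    ← natCard_content_eq_ncard (shiftedEquivMarked lam)
      (isReadingOrder_shiftedCellList lam).nodup hm]
  rfl

theorem skewSchur_eq_sum_schurP_of_countsAgree {lam mu : List ℕ} {nus : List (List ℕ)} {d : ℕ}
    (hskew : (skewCellList lam mu).length ≤ d)
    (hshifted : ∀ nu ∈ nus, (shiftedCellList nu).length ≤ d)
    (h : countsAgree (fun _ => false) (fun c => c.1 != c.2) d [(skewCellList lam mu, 1)]
      (nus.map fun nu => (shiftedCellList nu, 1))) :
    skewSchur lam mu = (nus.map schurP).sum := by
  ext m
  set N := m.support.sup id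
  have hm : ∀ k, N < k → m k = 0 := fun k hk => Finsupp.notMem_support_iff.1 fun hmem =>
    hk.not_ge (Finset.le_sup (f := id) hmem)
  have hcount : weightedCount (fun _ => false) N (partialSums m) [(skewCellList lam mu, 1)] =
      weightedCount (fun c => c.1 != c.2) N (partialSums m)
        (nus.map fun nu => (shiftedCellList nu, 1)) := by
    by_cases hM : partialSums m 0 = 0 ∧ partialSums m N ≤ d
    · exact weightedCount_eq_of_countsAgree monotone_partialSums hM.1
        (by simpa using isReadingOrder_skewCellList lam mu)
        (by simpa using fun nu _ => isReadingOrder_shiftedCellList nu) h hM.2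
    · rw [weightedCount_eq_zero (by simpa using hskew) hM,
        weightedCount_eq_zero (by simpa using hshifted) hM]
  have hcoeff : MvPowerSeries.coeff m (nus.map schurP).sum =
      (weightedCount (fun c => c.1 != c.2) N (partialSums m)
        (nus.map fun nu => (shiftedCellList nu, 1)) : ℚ) := by
    rw [map_list_sum, weightedCount, List.map_map, List.map_map, Nat.cast_list_sum, List.map_map]
    refine congrArg List.sum (List.map_congr_left fun nu _ => ?_)
    simpa using coeff_schurP nu hm
  rw [hcoeff, ← hcount]
  simpa [weightedCount] using coeff_skewSchur lam mu hm

end Coefficients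

theorem countsAgree_staircase_54321_32 :
    countsAgree (fun _ => false) (fun c => c.1 != c.2) 10
      [(skewCellList [5, 4, 3, 2, 1] [3, 2], 1)]
      ([[5, 4, 1], [5, 3, 2]].map fun nu => (shiftedCellList nu, 1)) := by
  decide +kernel

theorem skewSchur_staircase_54321_32 :
    skewSchur [5, 4, 3, 2, 1] [3, 2] = schurP [5, 4, 1] + schurP [5, 3, 2] := by
  have := skewSchur_eq_sum_schurP_of_countsAgree (by decide) (by decide)
    countsAgree_staircase_54321_32
  simpa using this

end
end

section
/- The skew Schur function s_{δ_5/δ_3} = s_{(5,4,3,2,1)/(3,2,1)} equals P_{(5,4)} + 2·P_{(5,3,1)} + P_{(4,3,2)}. -/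
/-!
STATEMENT 13: s_{δ₅/δ₃} = s_{(5,4,3,2,1)/(3,2,1)} = P_{(5,4)} + 2·P_{(5,3,1)} + P_{(4,3,2)}.
-/

noncomputable section

/-!
Doubling the entries of an ordinary semistandard tableau gives a filling in the alphabet
`1' < 1 < 2' < 2 < ⋯` without primed letters, so coefficients on both sides count fillings of the
same kind, with primes forbidden on all cells or only on the diagonal.  Such a filling is read off
from the largest letter down: the cells carrying `k` form a horizontal strip on the rim, and below
them those carrying `k'` form a vertical strip.  The resulting recursion is unchanged when a letter
that does not occur is skipped, and all four shapes have nine cells.  Hence it suffices to compare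
the coefficients of the monomials whose exponents form one of the 256 compositions of 9; the kernel
computes these, with sets of cells represented by bit masks.
-/

open Finset

/-! ### Marked fillings -/

/-- The cell to the right of `c`. -/
def rightCell (c : ℕ × ℕ) : ℕ × ℕ := (c.1, c.2 + 1)

/-- The cell below `c`. -/
def belowCell (c : ℕ × ℕ) : ℕ × ℕ := (c.1 + 1, c.2)

/-- `f` increases weakly from each cell of `S` to its neighbour in direction `p`, and a letter may
be repeated there only if it satisfies `P`. -/
def MonotoneAlong (p : ℕ × ℕ → ℕ × ℕ) (P : ℕ → Prop) (S : Finset (ℕ × ℕ)) (f : ℕ × ℕ → ℕ) : Prop :=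
  ∀ c ∈ S, p c ∈ S → f c ≤ f (p c) ∧ (f c = f (p c) → P (f c))

/-- A semistandard filling of the cells `S` in the alphabet `1' < 1 < 2' < 2 < ⋯`, encoded as in
`ShiftedSSYT` and extended by zero, in which the cells of `D` carry no primes.  With `D` the main
diagonal this is a shifted tableau; with `D = S` it is an ordinary semistandard tableau. -/
structure IsMarkedFilling (D S : Finset (ℕ × ℕ)) (f : ℕ × ℕ → ℕ) : Prop where
  ne_zero_iff : ∀ c, f c ≠ 0 ↔ c ∈ S
  row : MonotoneAlong rightCell Even S f
  col : MonotoneAlong belowCell Odd S f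
  even_of_mem : ∀ c ∈ S, c ∈ D → Even (f c)

theorem IsMarkedFilling.eq_zero {D S : Finset (ℕ × ℕ)} {f : ℕ × ℕ → ℕ}
    (hf : IsMarkedFilling D S f) {c : ℕ × ℕ} (hc : c ∉ S) : f c = 0 :=
  not_not.mp (mt (hf.ne_zero_iff c).mp hc)

/-- The number of marked fillings of `S` in which `k` and `k'` occur `m k` times in total. -/
def markedCount (D S : Finset (ℕ × ℕ)) (m : ℕ → ℕ) : ℕ :=
  Nat.card {f // IsMarkedFilling D S f ∧ ∀ k, #{c ∈ S | (f c + 1) / 2 = k} = m k}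

/-- Doubling the entries turns semistandard tableaux into marked fillings without primes. -/
def skewSSYTEquiv (lam mu : List ℕ) :
    SkewSSYT lam mu ≃ {f // IsMarkedFilling (skewCells lam mu) (skewCells lam mu) f} where
  toFun T := ⟨fun c => 2 * T.entry c,
    { ne_zero_iff := fun c => by
        by_cases hc : c ∈ skewCells lam mu
        · simpa [hc] using Nat.one_le_iff_ne_zero.mp (T.pos c hc)
        · simp [hc, T.outside c hc]
      row := fun c hc hr => ⟨Nat.mul_le_mul_left 2 (T.rowWeak c.1 c.2 hc hr),
        fun _ => even_two_mul _⟩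
      col := fun c hc hb => by
        have hlt : 2 * T.entry c < 2 * T.entry (belowCell c) :=
          Nat.mul_lt_mul_of_pos_left (T.colStrict c.1 c.2 hc hb) two_pos
        exact ⟨hlt.le, fun h => absurd h hlt.ne⟩
      even_of_mem := fun _ _ _ => even_two_mul _ }⟩
  invFun f :=
    { entry := fun c => f.1 c / 2
      outside := fun c hc => by simp [f.2.eq_zero hc]
      pos := fun c hc => by
        have := (f.2.ne_zero_iff c).mpr hc
        have := (f.2.even_of_mem c hc hc).two_dvd
        omega
      rowWeak := fun i j hc hr => Nat.div_le_div_right (f.2.row (i, j) hc hr).1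
      colStrict := fun i j hc hb => by
        obtain ⟨hle, hodd⟩ := f.2.col (i, j) hc hb
        have hc2 := f.2.even_of_mem _ hc hc
        have hb2 := (f.2.even_of_mem _ hb hb).two_dvd
        have hne : f.1 (i, j) ≠ f.1 (i + 1, j) := fun h => Nat.not_odd_iff_even.mpr hc2 (hodd h)
        have := hc2.two_dvd
        simp only [belowCell] at hle
        omega }
  left_inv T := by cases T; simp
  right_inv f := by
    ext c
    by_cases hc : c ∈ skewCells lam mu
    · exact Nat.mul_div_cancel' (f.2.even_of_mem c hc hc).two_dvd
    · simp [f.2.eq_zero hc]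

/-- Cells of the main diagonal. -/
def diagonalCells (S : Finset (ℕ × ℕ)) : Finset (ℕ × ℕ) := {c ∈ S | c.1 = c.2}

/-- Shifted tableaux are marked fillings with an unprimed diagonal. -/
def shiftedSSYTEquiv (lam : List ℕ) :
    ShiftedSSYT lam ≃
      {f // IsMarkedFilling (diagonalCells (shiftedCells lam)) (shiftedCells lam) f} where
  toFun T := ⟨T.entry,
    { ne_zero_iff := fun c =>
        ⟨fun h => not_not.mp (mt (T.outside c) h), fun hc => Nat.one_le_iff_ne_zero.mp (T.pos c hc)⟩
      row := fun c hc hr => ⟨T.rowWeak c.1 c.2 hc hr, T.rowPrime c.1 c.2 hc hr⟩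
      col := fun c hc hb => ⟨T.colWeak c.1 c.2 hc hb, T.colPrime c.1 c.2 hc hb⟩
      even_of_mem := by
        rintro ⟨i, j⟩ hc hd
        obtain rfl : i = j := (mem_filter.mp hd).2
        exact T.diag i hc }⟩
  invFun f :=
    { entry := f.1
      outside := fun c hc => f.2.eq_zero hc
      pos := fun c hc => Nat.one_le_iff_ne_zero.mpr ((f.2.ne_zero_iff c).mpr hc)
      rowWeak := fun i j hc hr => (f.2.row (i, j) hc hr).1
      rowPrime := fun i j hc hr => (f.2.row (i, j) hc hr).2
      colWeak := fun i j hc hb => (f.2.col (i, j) hc hb).1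
      colPrime := fun i j hc hb => (f.2.col (i, j) hc hb).2
      diag := fun i hc => f.2.even_of_mem _ hc (mem_filter.mpr ⟨hc, rfl⟩) }
  left_inv _ := rfl
  right_inv _ := rfl

theorem skewSchur_apply (lam mu : List ℕ) (m : ℕ →₀ ℕ) :
    skewSchur lam mu m = markedCount (skewCells lam mu) (skewCells lam mu) m := by
  refine congrArg Nat.cast (Nat.card_congr (((skewSSYTEquiv lam mu).subtypeEquiv fun T => ?_).trans
    (Equiv.subtypeSubtypeEquivSubtypeInter _ fun f : ℕ × ℕ → ℕ =>
      ∀ k, #{c ∈ skewCells lam mu | (f c + 1) / 2 = k} = m k)))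
  have half (c : ℕ × ℕ) : (2 * T.entry c + 1) / 2 = T.entry c := by omega
  simp only [skewSSYTEquiv, Equiv.coe_fn_mk, half]

theorem schurP_apply (lam : List ℕ) (m : ℕ →₀ ℕ) :
    schurP lam m = markedCount (diagonalCells (shiftedCells lam)) (shiftedCells lam) m :=
  congrArg Nat.cast (Nat.card_congr (((shiftedSSYTEquiv lam).subtypeEquiv fun _ => Iff.rfl).trans
    (Equiv.subtypeSubtypeEquivSubtypeInter _ fun f : ℕ × ℕ → ℕ =>
      ∀ k, #{c ∈ shiftedCells lam | (f c + 1) / 2 = k} = m k)))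

theorem markedCount_eq_zero {D S : Finset (ℕ × ℕ)} {m : ℕ → ℕ} (hm : m 0 ≠ 0) :
    markedCount D S m = 0 := by
  refine Nat.card_eq_zero.mpr (.inl ⟨fun ⟨f, hf, hcontent⟩ => hm ?_⟩)
  rw [← hcontent 0, card_eq_zero, filter_eq_empty_iff]
  intro c hc
  have := (hf.ne_zero_iff c).mpr hc
  omega

/-! ### Removing the largest letter -/

/-- The results of removing from `S` cells outside `D` whose `p`-neighbour is not in `S` and whose
`q`-neighbour, if in `S`, is removed as well. -/
def strips (p q : ℕ × ℕ → ℕ × ℕ) (D S : Finset (ℕ × ℕ)) : Finset (Finset (ℕ × ℕ)) :=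
  {T ∈ S.powerset | ∀ c ∈ S \ T, p c ∉ S ∧ q c ∉ T ∧ c ∉ D}

/-- The results of removing a horizontal strip (no two cells in a column) from the outer rim. -/
abbrev hStrips (S : Finset (ℕ × ℕ)) : Finset (Finset (ℕ × ℕ)) := strips belowCell rightCell ∅ S

/-- The results of removing a vertical strip disjoint from `D` from the outer rim. -/
abbrev vStrips (D S : Finset (ℕ × ℕ)) : Finset (Finset (ℕ × ℕ)) := strips rightCell belowCell D S

theorem self_mem_strips (p q : ℕ × ℕ → ℕ × ℕ) (D S : Finset (ℕ × ℕ)) : S ∈ strips p q D S := by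
  simp [strips]

theorem subset_of_mem_strips {p q : ℕ × ℕ → ℕ × ℕ} {D S T : Finset (ℕ × ℕ)}
    (hT : T ∈ strips p q D S) : T ⊆ S :=
  mem_powerset.mp (mem_filter.mp hT).1

/-- The possible sets of cells left after deleting the largest letter `n` from a marked filling. -/
def layers (D : Finset (ℕ × ℕ)) (n : ℕ) (S : Finset (ℕ × ℕ)) : Finset (Finset (ℕ × ℕ)) :=
  if Even n then hStrips S else vStrips D S

theorem mem_layers {D S T : Finset (ℕ × ℕ)} {n : ℕ} (hTS : T ⊆ S) :
    T ∈ layers D n S ↔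
      (∀ c ∈ S \ T, rightCell c ∈ S → rightCell c ∉ T ∧ Even n) ∧
      (∀ c ∈ S \ T, belowCell c ∈ S → belowCell c ∉ T ∧ Odd n) ∧
      ∀ c ∈ S \ T, c ∈ D → Even n := by
  have notMem {c : ℕ × ℕ} (h : c ∉ S) : c ∉ T := fun hT => h (hTS hT)
  by_cases hn : Even n
  · have hodd : ¬ Odd n := Nat.not_odd_iff_even.mpr hn
    simp only [layers, strips, hn, hodd, if_true, notMem_empty, mem_filter, mem_powerset, hTS,
      true_and]
    grind
  · have hodd : Odd n := Nat.not_even_iff_odd.mp hn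
    simp only [layers, strips, hn, hodd, if_false, mem_filter, mem_powerset, hTS, true_and]
    grind

/-- `g` on `T` and the letter `n` on `S \ T`. -/
def stack (n : ℕ) (S T : Finset (ℕ × ℕ)) (g : ℕ × ℕ → ℕ) (c : ℕ × ℕ) : ℕ :=
  if c ∈ T then g c else if c ∈ S then n else 0

section Stack

variable {D S T : Finset (ℕ × ℕ)} {n : ℕ} {g : ℕ × ℕ → ℕ}

theorem monotoneAlong_stack_iff {p : ℕ × ℕ → ℕ × ℕ} {P : ℕ → Prop} (hTS : T ⊆ S)
    (hg : ∀ c, g c < n) :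
    MonotoneAlong p P S (stack n S T g) ↔
      MonotoneAlong p P T g ∧ ∀ c ∈ S \ T, p c ∈ S → p c ∉ T ∧ P n := by
  have old {c} (hc : c ∈ T) : stack n S T g c = g c := if_pos hc
  have new {c} (hS : c ∈ S) (hT : c ∉ T) : stack n S T g c = n := by simp [stack, hS, hT]
  constructor
  · refine fun h => ⟨fun c hc hp => ?_, fun c hc hp => ?_⟩
    · simpa only [old hc, old hp] using h c (hTS hc) (hTS hp)
    · obtain ⟨hcS, hcT⟩ := mem_sdiff.mp hc
      obtain ⟨hle, htie⟩ := h c hcS hp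
      rw [new hcS hcT] at hle htie
      have hpT : p c ∉ T := fun hpT => (hg (p c)).not_ge (old hpT ▸ hle)
      exact ⟨hpT, htie (new hp hpT).symm⟩
  · rintro ⟨hold, hnew⟩ c hc hp
    by_cases hcT : c ∈ T
    · by_cases hpT : p c ∈ T
      · simpa only [old hcT, old hpT] using hold c hcT hpT
      · rw [old hcT, new hp hpT]
        exact ⟨(hg c).le, fun h => absurd h (hg c).ne⟩
    · obtain ⟨hpT, hP⟩ := hnew c (mem_sdiff.mpr ⟨hc, hcT⟩) hp
      rw [new hc hcT, new hp hpT]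
      exact ⟨le_rfl, fun _ => hP⟩

theorem isMarkedFilling_stack_iff (hTS : T ⊆ S) (hg : ∀ c, g c < n) (hg0 : ∀ c ∉ T, g c = 0) :
    IsMarkedFilling D S (stack n S T g) ↔ T ∈ layers D n S ∧ IsMarkedFilling D T g := by
  have hsupport : (∀ c, stack n S T g c ≠ 0 ↔ c ∈ S) ↔ ∀ c, g c ≠ 0 ↔ c ∈ T :=
    forall_congr' fun c => by have := hg c; have := hg0 c; have := @hTS c; grind [stack]
  have heven : (∀ c ∈ S, c ∈ D → Even (stack n S T g c)) ↔
      (∀ c ∈ T, c ∈ D → Even (g c)) ∧ ∀ c ∈ S \ T, c ∈ D → Even n := by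
    grind [stack]
  have hrow := monotoneAlong_stack_iff (p := rightCell) (P := Even) hTS hg
  have hcol := monotoneAlong_stack_iff (p := belowCell) (P := Odd) hTS hg
  rw [mem_layers hTS]
  constructor
  · rintro ⟨h1, h2, h3, h4⟩
    exact ⟨⟨(hrow.mp h2).2, (hcol.mp h3).2, (heven.mp h4).2⟩,
      hsupport.mp h1, (hrow.mp h2).1, (hcol.mp h3).1, (heven.mp h4).1⟩
  · rintro ⟨⟨hr, hc, hd⟩, h1, h2, h3, h4⟩
    exact ⟨hsupport.mpr h1, hrow.mpr ⟨h2, hr⟩, hcol.mpr ⟨h3, hc⟩, heven.mpr ⟨h4, hd⟩⟩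

end Stack

/-- Marked fillings of `S` with letters at most `n`, in which the letters `1', 1, …, j', j` occupy
`M j` cells for every `j` with `2 * j ≤ n`. -/
def boundedFillings (D : Finset (ℕ × ℕ)) (M : ℕ → ℕ) (n : ℕ) (S : Finset (ℕ × ℕ)) :
    Set (ℕ × ℕ → ℕ) :=
  {f | IsMarkedFilling D S f ∧ (∀ c, f c ≤ n) ∧ ∀ j, 2 * j ≤ n → #{c ∈ S | f c ≤ 2 * j} = M j}

section BoundedFillings

variable {D S T : Finset (ℕ × ℕ)} {M : ℕ → ℕ} {n k : ℕ} {g : ℕ × ℕ → ℕ}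

instance : Finite (boundedFillings D M n S) := by
  refine Finite.of_injective (β := S → Fin (n + 1))
    (fun f c => ⟨f.1 c, Nat.lt_succ_of_le (f.2.2.1 c)⟩) fun f g hfg => ?_
  ext c
  by_cases hc : c ∈ S
  · exact congrArg Fin.val (congrFun hfg ⟨c, hc⟩)
  · rw [f.2.1.eq_zero hc, g.2.1.eq_zero hc]

theorem stack_mem_boundedFillings_iff (hM : ∀ j, 2 * j = n + 1 → #S = M j) (hTS : T ⊆ S)
    (hg : ∀ c, g c ≤ n) (hg0 : ∀ c ∉ T, g c = 0) :
    stack (n + 1) S T g ∈ boundedFillings D M (n + 1) S ↔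
      T ∈ layers D (n + 1) S ∧ g ∈ boundedFillings D M n T := by
  have hbound (c) : stack (n + 1) S T g c ≤ n + 1 := by have := hg c; grind [stack]
  have hlow {j} (hj : 2 * j ≤ n) :
      {c ∈ S | stack (n + 1) S T g c ≤ 2 * j} = {c ∈ T | g c ≤ 2 * j} := by
    ext c; have := @hTS c; grind [stack]
  have htop {j} (hj : 2 * j = n + 1) : {c ∈ S | stack (n + 1) S T g c ≤ 2 * j} = S :=
    filter_true_of_mem fun c _ => hj ▸ hbound c
  have hcontent : (∀ j, 2 * j ≤ n + 1 → #{c ∈ S | stack (n + 1) S T g c ≤ 2 * j} = M j) ↔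
      ∀ j, 2 * j ≤ n → #{c ∈ T | g c ≤ 2 * j} = M j := by
    refine ⟨fun h j hj => hlow hj ▸ h j (by omega), fun h j hj => ?_⟩
    rcases Nat.le_succ_iff.mp hj with hj | hj
    · exact hlow hj ▸ h j hj
    · exact (congrArg card (htop hj)).trans (hM j hj)
  simp only [boundedFillings, Set.mem_ofPred_eq, hcontent, hg, hbound, implies_true, true_and,
    isMarkedFilling_stack_iff hTS (fun c => Nat.lt_succ_of_le (hg c)) hg0, and_assoc]

theorem layers_subset (hT : T ∈ layers D n S) : T ⊆ S := by
  unfold layers at hT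
  split at hT <;> exact subset_of_mem_strips hT

theorem stack_injective {T' : Finset (ℕ × ℕ)} {g' : ℕ × ℕ → ℕ}
    (hTS : T ⊆ S) (hTS' : T' ⊆ S) (hg : ∀ c, g c < n) (hg' : ∀ c, g' c < n)
    (hg0 : ∀ c ∉ T, g c = 0) (hg0' : ∀ c ∉ T', g' c = 0)
    (h : stack n S T g = stack n S T' g') : T = T' ∧ g = g' := by
  have hTT : T = T' := by
    ext c
    have := congrFun h c
    have := hg c; have := hg' c; have := @hTS c; have := @hTS' c
    grind [stack]
  subst hTT
  refine ⟨rfl, funext fun c => ?_⟩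
  have := congrFun h c
  grind [stack]

theorem exists_stack_eq {f : ℕ × ℕ → ℕ} (hf : IsMarkedFilling D S f) (hn : ∀ c, f c ≤ n + 1) :
    ∃ T g, T ⊆ S ∧ (∀ c, g c ≤ n) ∧ (∀ c ∉ T, g c = 0) ∧ stack (n + 1) S T g = f := by
  refine ⟨{c ∈ S | f c ≤ n}, fun c => if f c ≤ n then f c else 0, filter_subset _ _,
    fun c => by grind, fun c hc => ?_, funext fun c => ?_⟩
  · have := hf.eq_zero (c := c)
    grind
  · have := hf.eq_zero (c := c)
    have := hn c
    grind [stack]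

theorem card_boundedFillings_succ (hM : ∀ j, 2 * j = n + 1 → #S = M j) :
    Nat.card (boundedFillings D M (n + 1) S) =
      ∑ T ∈ layers D (n + 1) S, Nat.card (boundedFillings D M n T) := by
  rw [← sum_coe_sort, ← Nat.card_sigma]
  refine (Nat.card_eq_of_bijective
    (fun x : Σ T : layers D (n + 1) S, boundedFillings D M n T =>
      (⟨stack (n + 1) S x.1 x.2, (stack_mem_boundedFillings_iff hM (layers_subset x.1.2)
        x.2.2.2.1 fun _ => x.2.2.1.eq_zero).mpr ⟨x.1.2, x.2.2⟩⟩ :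
        boundedFillings D M (n + 1) S)) ⟨?_, ?_⟩).symm
  · rintro ⟨⟨T, hT⟩, g, hg⟩ ⟨⟨T', hT'⟩, g', hg'⟩ h
    obtain ⟨rfl, rfl⟩ := stack_injective (layers_subset hT) (layers_subset hT')
      (fun c => Nat.lt_succ_of_le (hg.2.1 c)) (fun c => Nat.lt_succ_of_le (hg'.2.1 c))
      (fun _ => hg.1.eq_zero) (fun _ => hg'.1.eq_zero) (congrArg Subtype.val h)
    rfl
  · rintro ⟨f, hf⟩
    obtain ⟨T, g, hTS, hg, hg0, rfl⟩ := exists_stack_eq hf.1 hf.2.1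
    obtain ⟨hT, hgT⟩ := (stack_mem_boundedFillings_iff hM hTS hg hg0).mp hf
    exact ⟨⟨⟨T, hT⟩, g, hgT⟩, rfl⟩

theorem card_eq_of_card_boundedFillings_ne_zero
    (h : Nat.card (boundedFillings D M (2 * k) S) ≠ 0) : #S = M k := by
  obtain ⟨⟨⟨f, -, hle, hcontent⟩⟩, -⟩ := Nat.card_ne_zero.mp h
  rw [← hcontent k le_rfl, filter_true_of_mem fun c _ => hle c]

theorem card_boundedFillings_zero (hM : M 0 = 0) :
    Nat.card (boundedFillings D M 0 S) = if S = ∅ then 1 else 0 := by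
  split_ifs with hS
  · subst hS
    refine Nat.card_eq_one_iff_exists.mpr ⟨⟨0, ⟨by simp, ?_, ?_, by simp⟩, by simp, ?_⟩, ?_⟩
    · simp [MonotoneAlong]
    · simp [MonotoneAlong]
    · intro j hj
      obtain rfl : j = 0 := by omega
      simp [hM]
    · rintro ⟨f, hf⟩
      exact Subtype.ext (funext fun c => hf.1.eq_zero (notMem_empty c))
  · by_contra h
    exact hS (card_eq_zero.mp ((card_eq_of_card_boundedFillings_ne_zero (k := 0) h).trans hM))

end BoundedFillings

/-- The number of marked fillings of `S` of content `[m k, …, m 1]`, by the recursion that deletes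
the letters `k` and then the letters `k'`. -/
def stripCount (D : Finset (ℕ × ℕ)) : List ℕ → Finset (ℕ × ℕ) → ℕ
  | [], S => if S = ∅ then 1 else 0
  | a :: l, S =>
    if #S = a + l.sum then ∑ U ∈ hStrips S, ∑ T ∈ vStrips D U, stripCount D l T else 0

/-- The list `[m k, …, m 1]`. -/
def contentList (m : ℕ → ℕ) : ℕ → List ℕ
  | 0 => []
  | k + 1 => m (k + 1) :: contentList m k

theorem sum_contentList {m : ℕ → ℕ} (hm : m 0 = 0) (k : ℕ) :
    (contentList m k).sum = ∑ i ∈ range (k + 1), m i := by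
  induction k with
  | zero => simp [contentList, hm]
  | succ k ih => rw [contentList, List.sum_cons, ih, sum_range_succ _ (k + 1), add_comm]

theorem card_boundedFillings (D : Finset (ℕ × ℕ)) {m : ℕ → ℕ} (hm : m 0 = 0) (k : ℕ)
    (S : Finset (ℕ × ℕ)) :
    Nat.card (boundedFillings D (fun j => ∑ i ∈ range (j + 1), m i) (2 * k) S) =
      stripCount D (contentList m k) S := by
  induction k generalizing S with
  | zero => exact card_boundedFillings_zero (by simp [hm])
  | succ k ih =>
    have hsum : m (k + 1) + (contentList m k).sum = ∑ i ∈ range (k + 1 + 1), m i := by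
      rw [← sum_contentList hm, contentList, List.sum_cons]
    rw [contentList, stripCount, hsum]
    split_ifs with hS
    · rw [mul_add_one, card_boundedFillings_succ fun j hj => by
        obtain rfl : j = k + 1 := by omega
        exact hS]
      refine sum_congr (by simp [layers, parity_simps]) fun U _ => ?_
      rw [card_boundedFillings_succ fun j hj => by omega]
      exact sum_congr (by simp [layers, parity_simps]) fun T _ => ih T
    · by_contra h
      exact hS (card_eq_of_card_boundedFillings_ne_zero h)

theorem card_fiber_eq_iff {α : Type*} (S : Finset α) (g : α → ℕ) (m : ℕ → ℕ) :
    (∀ k, #{c ∈ S | g c = k} = m k) ↔ ∀ k, #{c ∈ S | g c ≤ k} = ∑ i ∈ range (k + 1), m i := by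
  have hcumulative (k : ℕ) :
      #{c ∈ S | g c ≤ k} = ∑ i ∈ range (k + 1), #{c ∈ S | g c = i} := by
    rw [card_eq_sum_card_fiberwise (f := g) (t := range (k + 1)) (by intro c; simp)]
    refine sum_congr rfl fun i hi => ?_
    rw [filter_filter]
    congr! 2 with c
    have := mem_range.mp hi
    omega
  refine ⟨fun h k => by simp only [hcumulative, h], fun h k => ?_⟩
  simp only [hcumulative] at h
  cases k with
  | zero => simpa using h 0
  | succ k =>
    have := h (k + 1)
    rw [sum_range_succ, sum_range_succ _ (k + 1), h k] at this
    exact Nat.add_left_cancel this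

theorem markedCount_eq_stripCount (D S : Finset (ℕ × ℕ)) {m : ℕ → ℕ} (hm : m 0 = 0) {N : ℕ}
    (hN : ∀ k, N < k → m k = 0) :
    markedCount D S m = stripCount D (contentList m N) S := by
  rw [← card_boundedFillings D hm, markedCount]
  refine Nat.card_congr (Equiv.subtypeEquivRight fun f => and_congr_right fun hf => ?_)
  have hhalf (c : ℕ × ℕ) (k : ℕ) : (f c + 1) / 2 ≤ k ↔ f c ≤ 2 * k := by omega
  have hcumulative := card_fiber_eq_iff S (fun c => (f c + 1) / 2) m
  simp only [hhalf] at hcumulative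
  constructor
  · intro hcontent
    refine ⟨fun c => ?_, fun j _ => hcumulative.mp hcontent j⟩
    by_contra! hc
    have hletter := hN ((f c + 1) / 2) (by omega)
    rw [← hcontent, card_eq_zero, filter_eq_empty_iff] at hletter
    exact hletter ((hf.ne_zero_iff c).mp (by omega)) rfl
  · rintro ⟨hle, hcontent⟩
    refine hcumulative.mpr fun j => ?_
    rcases le_or_gt j N with hj | hj
    · exact hcontent j (by omega)
    · have htail : ∑ i ∈ range (j + 1), m i = ∑ i ∈ range (N + 1), m i :=
        (sum_subset (range_mono (by omega)) fun i _ hi =>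
          hN i (by rw [mem_range] at hi; omega)).symm
      refine Eq.trans ?_ ((hcontent N le_rfl).trans htail.symm)
      congr! 2 with c
      have := hle c
      omega

section StripCount

variable {D S T : Finset (ℕ × ℕ)} {l : List ℕ}

theorem card_eq_sum_of_stripCount_ne_zero (h : stripCount D l S ≠ 0) : #S = l.sum := by
  cases l with
  | nil => simpa [stripCount] using h
  | cons a l =>
    rw [List.sum_cons]
    by_contra hS
    exact h (if_neg hS)

theorem stripCount_zero_cons : stripCount D (0 :: l) S = stripCount D l S := by
  rw [stripCount, zero_add]
  split_ifs with hS
  · have hzero {T} (hT : T ⊂ S) : stripCount D l T = 0 := by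
      by_contra h
      exact (card_lt_card hT).ne ((card_eq_sum_of_stripCount_ne_zero h).trans hS.symm)
    rw [sum_eq_single_of_mem S (self_mem_strips _ _ _ S),
      sum_eq_single_of_mem S (self_mem_strips _ _ D S)]
    · exact fun T hT hTS => hzero ((subset_of_mem_strips hT).ssubset_of_ne hTS)
    · exact fun U hU hUS => sum_eq_zero fun T hT => hzero
        ((subset_of_mem_strips hT).trans_ssubset ((subset_of_mem_strips hU).ssubset_of_ne hUS))
  · by_contra h
    exact hS (card_eq_sum_of_stripCount_ne_zero fun h0 => h h0.symm)

theorem sum_filter_ne_zero (l : List ℕ) : (l.filter (· ≠ 0)).sum = l.sum := by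
  induction l with
  | nil => rfl
  | cons a l ih => by_cases ha : a = 0 <;> simp_all

theorem stripCount_filter_ne_zero (D : Finset (ℕ × ℕ)) (l : List ℕ) (S : Finset (ℕ × ℕ)) :
    stripCount D (l.filter (· ≠ 0)) S = stripCount D l S := by
  induction l generalizing S with
  | nil => rfl
  | cons a l ih =>
    by_cases ha : a = 0
    · subst ha
      rw [stripCount_zero_cons, ← ih]
      rfl
    · rw [List.filter_cons_of_pos (by simpa using ha), stripCount, stripCount, sum_filter_ne_zero]
      simp only [ih]

end StripCount

/-- The lists of positive integers with sum `n`. -/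
def compositions : ℕ → List (List ℕ)
  | 0 => [[]]
  | n + 1 => (compositions n).flatMap fun
    | [] => [[1]]
    | a :: l => [1 :: a :: l, (a + 1) :: l]

theorem mem_compositions {n : ℕ} {l : List ℕ} (hl : ∀ a ∈ l, a ≠ 0) (hn : l.sum = n) :
    l ∈ compositions n := by
  induction n generalizing l with
  | zero =>
    rw [List.sum_eq_zero_iff] at hn
    rw [List.eq_nil_iff_forall_not_mem.mpr fun a ha => hl a ha (hn a ha)]
    exact List.mem_singleton_self _
  | succ n ih =>
    rw [compositions, List.mem_flatMap]
    match l, hl, hn with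
    | 0 :: _, hl, _ => simp at hl
    | 1 :: l, hl, hn =>
      refine ⟨l, ih (fun a ha => hl a (List.mem_cons_of_mem _ ha)) ?_, by cases l <;> simp⟩
      rw [List.sum_cons] at hn
      omega
    | (a + 2) :: l, hl, hn =>
      refine ⟨(a + 1) :: l, ih ?_ ?_, by simp⟩
      · simpa using fun b hb => hl b (List.mem_cons_of_mem _ hb)
      · rw [List.sum_cons] at hn ⊢
        omega

theorem markedCount_eq_zero_or_eq_stripCount (m : ℕ →₀ ℕ) (n : ℕ) :
    (∀ D S, #S = n → markedCount D S m = 0) ∨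
      ∃ l ∈ compositions n, ∀ D S, markedCount D S m = stripCount D l S := by
  by_cases hm : m 0 = 0
  · obtain ⟨l, hl⟩ : ∃ l, ∀ D S, markedCount D S m = stripCount D l S :=
      ⟨_, fun D S => markedCount_eq_stripCount D S hm (N := m.support.sup id) fun k hk =>
        Finsupp.notMem_support_iff.mp fun h => (le_sup (f := id) h).not_gt hk⟩
    by_cases hn : l.sum = n
    · refine .inr ⟨l.filter (· ≠ 0), mem_compositions (by simp) ?_, fun D S => ?_⟩
      · rw [sum_filter_ne_zero, hn]
      · rw [stripCount_filter_ne_zero, hl]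
    · refine .inl fun D S hS => by_contra fun h => hn ?_
      rw [← card_eq_sum_of_stripCount_ne_zero (hl D S ▸ h), hS]
  · exact .inl fun _ _ _ => markedCount_eq_zero hm

/-! ### Evaluation on bit masks -/

/-- The position of the cell `c` when the rows of a board of width `w` are read consecutively. -/
def cellIndex (w : ℕ) (c : ℕ × ℕ) : ℕ := w * c.1 + c.2

/-- The set of cells `S` as the number whose binary digits are its indicator function. -/
def cellMask (w : ℕ) (S : Finset (ℕ × ℕ)) : ℕ := ∑ c ∈ S, 2 ^ cellIndex w c

section CellMask

variable {w : ℕ} {C D S T : Finset (ℕ × ℕ)}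

theorem cellIndex_rightCell (c : ℕ × ℕ) : cellIndex w (rightCell c) = cellIndex w c + 1 := rfl

theorem cellIndex_belowCell (c : ℕ × ℕ) : cellIndex w (belowCell c) = cellIndex w c + w := by
  simp only [cellIndex, belowCell]
  ring

theorem cellIndex_injOn (w : ℕ) : Set.InjOn (cellIndex w) {c | c.2 < w} := by
  rintro ⟨i, j⟩ (hj : j < w) ⟨i', j'⟩ (hj' : j' < w) (h : w * i + j = w * i' + j')
  have hw : 0 < w := by omega
  have hrow := congrArg (· / w) h
  have hcol := congrArg (· % w) h
  simp only [Nat.mul_add_div hw, Nat.div_eq_of_lt hj, Nat.div_eq_of_lt hj', add_zero] at hrow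
  simp only [Nat.mul_add_mod, Nat.mod_eq_of_lt hj, Nat.mod_eq_of_lt hj'] at hcol
  rw [hrow, hcol]

theorem testBit_cellMask (hS : ∀ c ∈ S, c.2 < w) (i : ℕ) :
    (cellMask w S).testBit i ↔ i ∈ S.image (cellIndex w) := by
  rw [cellMask, ← sum_image (g := cellIndex w) (f := fun i => 2 ^ i)
    fun c hc d hd => cellIndex_injOn w (hS c hc) (hS d hd),
    ← Nat.mem_bitIndices, ← List.mem_toFinset, toFinset_bitIndices_sum_two_pow]

theorem testBit_cellMask_cellIndex (hS : ∀ c ∈ S, c.2 < w) {c : ℕ × ℕ} (hc : c.2 < w) :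
    (cellMask w S).testBit (cellIndex w c) ↔ c ∈ S := by
  rw [testBit_cellMask hS, mem_image]
  refine ⟨?_, fun h => ⟨c, h, rfl⟩⟩
  rintro ⟨d, hd, h⟩
  exact cellIndex_injOn w (hS d hd) hc h ▸ hd

theorem cellMask_shiftLeft_and_eq_zero_iff {p : ℕ × ℕ → ℕ × ℕ} {k : ℕ}
    (hp : ∀ c, cellIndex w (p c) = cellIndex w c + k) (hS : ∀ c ∈ S, c.2 < w)
    (hpS : ∀ c ∈ S, (p c).2 < w) (hT : ∀ c ∈ T, c.2 < w) :
    cellMask w S <<< k &&& cellMask w T = 0 ↔ ∀ c ∈ S, p c ∉ T := by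
  have hbit : cellMask w S <<< k &&& cellMask w T = 0 ↔
      ∀ i, i ∈ S.image (cellIndex w) → ¬ (cellMask w T).testBit (i + k) := by
    simp only [← testBit_cellMask hS]
    constructor
    · intro h i hi hik
      simpa [hi, hik] using congrArg (fun n => n.testBit (i + k)) h
    · refine fun h => Nat.eq_of_testBit_eq fun j => ?_
      rw [Nat.testBit_and, Nat.testBit_shiftLeft, Nat.zero_testBit]
      by_contra hj
      simp only [Bool.not_eq_false, Bool.and_eq_true, decide_eq_true_eq] at hj
      exact h (j - k) hj.1.2 (by rw [Nat.sub_add_cancel hj.1.1]; exact hj.2)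
  simp only [hbit, forall_mem_image, ← hp]
  exact forall₂_congr fun c hc => not_congr (testBit_cellMask_cellIndex hT (hpS c hc))

theorem cellMask_and_eq_left_iff (hS : ∀ c ∈ S, c.2 < w) (hT : ∀ c ∈ T, c.2 < w) :
    cellMask w T &&& cellMask w S = cellMask w T ↔ T ⊆ S := by
  have hbit : cellMask w T &&& cellMask w S = cellMask w T ↔
      ∀ i, (cellMask w T).testBit i → (cellMask w S).testBit i := by
    simp only [Nat.eq_iff_testBit_eq, Nat.testBit_and, Bool.and_eq_left_iff_imp]
  simp only [hbit, testBit_cellMask hT, forall_mem_image]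
  exact forall₂_congr fun c hc => testBit_cellMask_cellIndex hS (hT c hc)

theorem cellMask_sub (hTS : T ⊆ S) : cellMask w S - cellMask w T = cellMask w (S \ T) :=
  Nat.sub_eq_of_eq_add (sum_sdiff hTS).symm

end CellMask

/-- `strips` on the masks of subsets of `C`, where passing to the neighbours of a set of cells is
shifting its mask by `i` or `j`. -/
def stripMasks (w i j : ℕ) (C D : Finset (ℕ × ℕ)) (s : ℕ) : Multiset ℕ :=
  (C.powerset.val.map (cellMask w)).filter fun t =>
    t &&& s = t ∧ (s - t) <<< i &&& s = 0 ∧ (s - t) <<< j &&& t = 0 ∧ (s - t) &&& cellMask w D = 0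

/-- `stripCount` on the masks of subsets of `C`; this is the form in which it is evaluated. -/
def maskCount (w : ℕ) (C D : Finset (ℕ × ℕ)) : List ℕ → ℕ → ℕ
  | [], s => if s = 0 then 1 else 0
  | a :: l, s =>
    if #{c ∈ C | s.testBit (cellIndex w c)} = a + l.sum then
      ((stripMasks w w 1 C ∅ s).map fun u =>
        ((stripMasks w 1 w C D u).map (maskCount w C D l)).sum).sum
    else 0

section MaskCount

variable {w : ℕ} {C D S : Finset (ℕ × ℕ)}

theorem stripMasks_cellMask {p q : ℕ × ℕ → ℕ × ℕ} {i j : ℕ}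
    (hp : ∀ c, cellIndex w (p c) = cellIndex w c + i)
    (hq : ∀ c, cellIndex w (q c) = cellIndex w c + j)
    (hpC : ∀ c ∈ C, (p c).2 < w) (hqC : ∀ c ∈ C, (q c).2 < w)
    (hC : ∀ c ∈ C, c.2 < w) (hD : D ⊆ C) (hS : S ⊆ C) :
    stripMasks w i j C D (cellMask w S) = (strips p q D S).val.map (cellMask w) := by
  have hw {T} (hT : T ⊆ C) c (hc : c ∈ T) : c.2 < w := hC c (hT hc)
  have htest {T} (hT : T ⊆ C) : (cellMask w T &&& cellMask w S = cellMask w T ∧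
      (cellMask w S - cellMask w T) <<< i &&& cellMask w S = 0 ∧
      (cellMask w S - cellMask w T) <<< j &&& cellMask w T = 0 ∧
      (cellMask w S - cellMask w T) &&& cellMask w D = 0) ↔
      T ⊆ S ∧ ∀ c ∈ S \ T, p c ∉ S ∧ q c ∉ T ∧ c ∉ D := by
    rw [cellMask_and_eq_left_iff (hw hS) (hw hT)]
    refine and_congr_right fun hTS => ?_
    have hdiff : S \ T ⊆ C := sdiff_subset.trans hS
    rw [cellMask_sub hTS, forall₂_and, forall₂_and,
      cellMask_shiftLeft_and_eq_zero_iff hp (hw hdiff) (fun c hc => hpC c (hdiff hc)) (hw hS),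
      cellMask_shiftLeft_and_eq_zero_iff hq (hw hdiff) (fun c hc => hqC c (hdiff hc)) (hw hT)]
    exact and_congr_right' (and_congr_right' (cellMask_shiftLeft_and_eq_zero_iff (p := id) (k := 0)
      (fun _ => rfl) (hw hdiff) (hw hdiff) (hw hD)))
  rw [stripMasks, Multiset.filter_map]
  refine congrArg _ (congrArg val (?_ : filter _ _ = _))
  ext T
  rw [strips, mem_filter, mem_filter, mem_powerset, mem_powerset]
  exact ⟨fun h => (htest h.1).mp h.2, fun h => ⟨h.1.trans hS, (htest (h.1.trans hS)).mpr h⟩⟩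

theorem maskCount_cellMask (hC : ∀ c ∈ C, c.2 + 1 < w) (hD : D ⊆ C) (l : List ℕ) (hS : S ⊆ C) :
    maskCount w C D l (cellMask w S) = stripCount D l S := by
  induction l generalizing S with
  | nil =>
    have hzero : cellMask w S = 0 ↔ S = ∅ := by
      simp [cellMask, sum_eq_zero_iff, eq_empty_iff_forall_notMem]
    simp only [maskCount, stripCount, hzero]
  | cons a l ih =>
    have hw c (hc : c ∈ C) : c.2 < w := (Nat.lt_succ_self _).trans (hC c hc)
    have hcells : {c ∈ C | (cellMask w S).testBit (cellIndex w c)} = S := by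
      rw [filter_congr fun c hc => testBit_cellMask_cellIndex (fun d hd => hw d (hS hd)) (hw c hc),
        filter_mem_eq_inter, inter_eq_right.mpr hS]
    rw [maskCount, stripCount, hcells,
      stripMasks_cellMask cellIndex_belowCell cellIndex_rightCell hw hC hw (empty_subset C) hS,
      Multiset.map_map]
    refine if_congr Iff.rfl (sum_congr rfl fun U hU => ?_) rfl
    have hUC := (subset_of_mem_strips hU).trans hS
    rw [Function.comp_apply,
      stripMasks_cellMask cellIndex_rightCell cellIndex_belowCell hC hw hw hD hUC, Multiset.map_map]
    exact sum_congr rfl fun T hT => ih ((subset_of_mem_strips hT).trans hUC)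

end MaskCount

theorem maskCount_staircase : ∀ l ∈ compositions 9,
    maskCount 6 (skewCells [5, 4, 3, 2, 1] [3, 2, 1]) (skewCells [5, 4, 3, 2, 1] [3, 2, 1]) l
        (cellMask 6 (skewCells [5, 4, 3, 2, 1] [3, 2, 1])) =
      maskCount 6 (shiftedCells [5, 4]) (diagonalCells (shiftedCells [5, 4])) l
          (cellMask 6 (shiftedCells [5, 4])) +
        2 * maskCount 6 (shiftedCells [5, 3, 1]) (diagonalCells (shiftedCells [5, 3, 1])) l
          (cellMask 6 (shiftedCells [5, 3, 1])) +
        maskCount 6 (shiftedCells [4, 3, 2]) (diagonalCells (shiftedCells [4, 3, 2])) l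
          (cellMask 6 (shiftedCells [4, 3, 2])) := by
  decide +kernel

theorem markedCount_staircase (m : ℕ →₀ ℕ) :
    markedCount (skewCells [5, 4, 3, 2, 1] [3, 2, 1]) (skewCells [5, 4, 3, 2, 1] [3, 2, 1]) m =
      markedCount (diagonalCells (shiftedCells [5, 4])) (shiftedCells [5, 4]) m +
        2 * markedCount (diagonalCells (shiftedCells [5, 3, 1])) (shiftedCells [5, 3, 1]) m +
        markedCount (diagonalCells (shiftedCells [4, 3, 2])) (shiftedCells [4, 3, 2]) m := by
  rcases markedCount_eq_zero_or_eq_stripCount m 9 with hzero | ⟨l, hl, hstrip⟩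
  · rw [hzero _ (skewCells _ _) (by decide), hzero _ (shiftedCells [5, 4]) (by decide),
      hzero _ (shiftedCells [5, 3, 1]) (by decide), hzero _ (shiftedCells [4, 3, 2]) (by decide)]
  · have hmask {C D : Finset (ℕ × ℕ)} (hC : ∀ c ∈ C, c.2 + 1 < 6) (hD : D ⊆ C) :
        maskCount 6 C D l (cellMask 6 C) = markedCount D C m :=
      (maskCount_cellMask hC hD l subset_rfl).trans (hstrip D C).symm
    have hdiagonal {C : Finset (ℕ × ℕ)} : diagonalCells C ⊆ C := filter_subset _ _
    have hcheck := maskCount_staircase l hl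
    rwa [hmask (C := skewCells _ _) (by decide) subset_rfl,
      hmask (C := shiftedCells [5, 4]) (by decide) hdiagonal,
      hmask (C := shiftedCells [5, 3, 1]) (by decide) hdiagonal,
      hmask (C := shiftedCells [4, 3, 2]) (by decide) hdiagonal] at hcheck

theorem skewSchur_staircase_54321_321 :
    skewSchur [5, 4, 3, 2, 1] [3, 2, 1] =
      schurP [5, 4] + 2 * schurP [5, 3, 1] + schurP [4, 3, 2] := by
  rw [two_mul]
  funext m
  change _ = schurP [5, 4] m + (schurP [5, 3, 1] m + schurP [5, 3, 1] m) + schurP [4, 3, 2] m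
  rw [skewSchur_apply, schurP_apply, schurP_apply, schurP_apply, markedCount_staircase]
  push_cast
  ring

end
end
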